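/- (Alladi's formula.) Let k ≥ 1, ℓ be integers with gcd(ℓ,k) = 1. Then the partial sums ∑_{2 ≤ n ≤ x, p(n) ≡ ℓ (mod k)} μ(n)/n converge, as x → ∞, to −1/φ(k), where μ is the Möbius function and φ is the Euler totient function. -/

import Mathlib

/-!
Write `p(n)` and `P(n)` for the least and the largest prime factor of `n`, and let `h` be the
indicator function of the residue class `ℓ` modulo `k` minus the constant `1 / φ(k)`. Since
`∑ μ(n) / n = 0`, the sum over `n ≥ 2` being `-1`, the formula is equivalent to
`∑_{n ≥ 2} μ(n) h(p(n)) / n = 0`.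

Alladi's duality states `∑_{d ∣ n, d > 1} μ(d) h(p(d)) = -h(P(n))` for `n ≥ 2`
(`sum_divisors_moebiusMinFac`). Summing over `n ≤ N` gives
`∑_{1 < d ≤ N} μ(d) h(p(d)) ⌊N / d⌋ = -∑_{2 ≤ n ≤ N} h(P(n))`. The right-hand side is `o(N)` because
largest prime factors are equidistributed among reduced residue classes (`sum_hres_maxFac`), and
`⌊N / d⌋` may be replaced by `N / d` at the cost of `o(N)` by Axer's theorem (`axer`), since
`μ(d) h(p(d))` has mean value zero (`meanZero_moebiusMinFac`). Division by `N` concludes.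

The analytic input is that `χ(n) μ(n)` has mean value zero for every Dirichlet character `χ`
(`meanZero_moebius_mul_char`). It follows from the nonvanishing of `L(s, χ)` on the line `re s = 1`
through a Tauberian theorem (`tauber`), proved by Fourier analysis and the Riemann–Lebesgue lemma.
Axer's theorem then yields the prime number theorem in arithmetic progressions in relative form
(`meanZero_hres_log_prime`), and the equidistribution of `P(n)` follows by writing `n = m p` with
`p = P(n)`, after discarding the few integers without a large prime factor (`smooth_count`).
-/

open Finset Filter

/-- `∑_{n ≤ N} a n = o(N)`. -/
def MeanZero (a : ℕ → ℂ) : Prop :=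
  ∀ ε > 0, ∃ N₀ : ℕ, ∀ N ≥ N₀, ‖∑ n ∈ Icc 1 N, a n‖ ≤ ε * N

/-! ### A Tauberian theorem for Laplace transforms -/

open MeasureTheory FourierTransform Topology SchwartzMap in
/-- A smoothing kernel of total mass one whose Fourier transform has compact support: the transform
of a bump function equal to `1` at the origin. -/
lemma tauber_kernel : ∃ ψ : 𝓢(ℝ, ℂ), HasCompactSupport ψ ∧ ∫ v, 𝓕 ψ v = 1 := by
  let b : ContDiffBump (0 : ℝ) := ⟨1, 2, by norm_num, by norm_num⟩
  have h1 : HasCompactSupport (fun x => (b x : ℂ)) := b.hasCompactSupport.comp_left (g := fun x : ℝ => (x : ℂ)) (by simp)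
  have h2 : ContDiff ℝ ((⊤ : ℕ∞) : WithTop ℕ∞) (fun x => (b x : ℂ)) :=
    Complex.ofRealCLM.contDiff.comp b.contDiff
  refine ⟨h1.toSchwartzMap h2, h1, ?_⟩
  set ψ := h1.toSchwartzMap h2
  have h3 : 𝓕⁻ (𝓕 ψ) = ψ := FourierTransform.fourierInv_fourier_eq ψ
  have h4 : (𝓕⁻ (𝓕 ψ)) 0 = ψ 0 := by rw [h3]
  have h5 : ψ 0 = 1 := by
    have : (b : ℝ → ℝ) 0 = 1 := b.one_of_mem_closedBall (by simp [b])
    simp [ψ, this]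
  rw [h5, SchwartzMap.fourierInv_coe, Real.fourierInv_eq] at h4
  simpa using h4

open MeasureTheory FourierTransform Topology SchwartzMap in
/-- The smoothed averages of `f` tend to zero. If the Laplace transform `G` of a bounded `f` extends
continuously to the imaginary axis, Parseval on the line `re s = σ` and `σ → 0` express the average
as the Fourier transform at `t` of the continuous, compactly supported function
`ξ ↦ ψ ξ * G (-2 * π * i * ξ)`, and the Riemann–Lebesgue lemma applies. -/
lemma tauber_core (ψ : 𝓢(ℝ, ℂ)) (hψ : HasCompactSupport ψ) (f : ℝ → ℂ) (hfm : Measurable f)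
    (C : ℝ) (hfC : ∀ t, ‖f t‖ ≤ C) (f0 : ∀ t < 0, f t = 0) (G : ℂ → ℂ)
    (hG : ContinuousOn G {s | 0 ≤ s.re})
    (hF : ∀ s : ℂ, 0 < s.re → ∫ u : ℝ, Complex.exp (-s * u) * f u = G s) :
    Tendsto (fun t => ∫ v, 𝓕 ψ v * f (t - v)) atTop (𝓝 0) := by
  have hC : 0 ≤ C := (norm_nonneg _).trans (hfC 0)
  set H : ℝ → ℂ := fun ξ => ψ ξ * G (((-(2 * Real.pi * ξ) : ℝ) : ℂ) * Complex.I) with hH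
  have key : ∀ t, ∫ v, 𝓕 ψ v * f (t - v) = 𝓕 H t := by
    intro t
    let g : ℝ → ℝ → ℂ := fun σ v => Complex.exp (-(σ : ℂ) * ((t - v : ℝ) : ℂ)) * f (t - v)
    have hgb : ∀ σ > 0, ∀ v, ‖g σ v‖ ≤ C := by
      intro σ hσ v
      by_cases h : t - v < 0
      · simp [g, f0 _ h, hC]
      · have : Real.exp (-σ * (t - v)) ≤ 1 := Real.exp_le_one_iff.2 (by nlinarith)
        have e : ‖Complex.exp (-(σ : ℂ) * ((t - v : ℝ) : ℂ))‖ = Real.exp (-σ * (t - v)) := by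
          rw [Complex.norm_exp]; congr 1; simp
        simp only [g, norm_mul, e]
        calc _ ≤ 1 * C := by gcongr; exact hfC _
          _ = C := one_mul _
    have hgm : ∀ σ, Measurable (g σ) := by
      intro σ; fun_prop
    have hexpf : ∀ σ : ℝ, 0 < σ → Integrable (fun u : ℝ => Complex.exp (-(σ : ℂ) * u) * f u) := by
      intro σ hσ
      have h1 : IntegrableOn (fun u : ℝ => Complex.exp (-(σ : ℂ) * u) * f u) (Set.Ici 0) := by
        have h2 : IntegrableOn (fun u : ℝ => C * Real.exp (-σ * u)) (Set.Ici 0) := by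
          rw [integrableOn_Ici_iff_integrableOn_Ioi]
          exact (integrableOn_exp_mul_Ioi (by linarith) 0).const_mul C
        refine Integrable.mono' h2 (by fun_prop) (Eventually.of_forall fun u => ?_)
        rw [norm_mul, Complex.norm_exp]
        have : (-(σ : ℂ) * u).re = -σ * u := by simp
        rw [this, mul_comm]
        gcongr
        exact hfC _
      refine (integrableOn_iff_integrable_of_support_subset ?_).1 h1
      intro u hu
      by_contra h
      exact hu (by simp [f0 u (by simpa using h)])
    have hgi : ∀ σ > 0, Integrable (g σ) := by
      intro σ hσ
      exact (hexpf σ hσ).comp_sub_left t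
    have hgF : ∀ σ > 0, ∀ ξ, 𝓕 (g σ) ξ = Complex.exp (((-(2 * Real.pi * (ξ * t)) : ℝ) : ℂ) * Complex.I)
        * G (σ + ((-(2 * Real.pi * ξ) : ℝ) : ℂ) * Complex.I) := by
      intro σ hσ ξ
      rw [Real.fourier_eq', ← hF _ (by simpa using hσ)]
      rw [← integral_sub_left_eq_self (fun v => _) volume t, ← integral_const_mul]
      congr 1; ext u
      simp only [g, sub_sub_cancel, smul_eq_mul]
      rw [← mul_assoc, ← mul_assoc, ← Complex.exp_add, ← Complex.exp_add]
      congr 2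
      simp
      ring
    have hdual : ∀ σ > 0, ∫ v, 𝓕 ψ v * g σ v = ∫ ξ, ψ ξ * (Complex.exp (((-(2 * Real.pi * (ξ * t)) : ℝ) : ℂ) * Complex.I)
        * G (σ + ((-(2 * Real.pi * ξ) : ℝ) : ℂ) * Complex.I)) := by
      intro σ hσ
      have := VectorFourier.integral_fourierIntegral_smul_eq_flip (L := innerₗ ℝ) (μ := volume) (ν := volume)
        Real.continuous_fourierChar continuous_inner ψ.integrable (hgi σ hσ)
      calc _ = ∫ ξ, ψ ξ * 𝓕 (g σ) ξ := by
            rw [SchwartzMap.fourier_coe]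
            simpa using! this
        _ = _ := by simp_rw [hgF σ hσ]
    -- both sides of `hdual` are continuous as `σ` decreases to zero
    have lim1 : Tendsto (fun σ : ℝ => ∫ v, 𝓕 ψ v * g σ v) (𝓝[>] 0) (𝓝 (∫ v, 𝓕 ψ v * f (t - v))) := by
      refine tendsto_integral_filter_of_dominated_convergence (fun v => ‖𝓕 ψ v‖ * C) ?_ ?_ ?_ ?_
      · refine Eventually.of_forall fun σ => ?_
        exact (𝓕 ψ).continuous.aestronglyMeasurable.mul (hgm σ).aestronglyMeasurable
      · filter_upwards [self_mem_nhdsWithin] with σ hσ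
        refine Eventually.of_forall fun v => ?_
        rw [norm_mul]; gcongr; exact hgb σ hσ v
      · exact (𝓕 ψ).integrable.norm.mul_const C
      · refine Eventually.of_forall fun v => ?_
        refine Tendsto.const_mul _ ?_
        have : Tendsto (fun σ : ℝ => g σ v) (𝓝 0) (𝓝 (g 0 v)) := by
          refine Continuous.tendsto ?_ 0
          fun_prop
        refine (tendsto_nhdsWithin_of_tendsto_nhds this).congr' ?_ |>.trans ?_
        · rfl
        · simp [g]
    have lim2 : Tendsto (fun σ : ℝ => ∫ ξ, ψ ξ * (Complex.exp (((-(2 * Real.pi * (ξ * t)) : ℝ) : ℂ) * Complex.I)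
        * G (σ + ((-(2 * Real.pi * ξ) : ℝ) : ℂ) * Complex.I))) (𝓝[>] 0) (𝓝 (𝓕 H t)) := by
      have hHt : 𝓕 H t = ∫ ξ, ψ ξ * (Complex.exp (((-(2 * Real.pi * (ξ * t)) : ℝ) : ℂ) * Complex.I)
          * G ((0:ℝ) + ((-(2 * Real.pi * ξ) : ℝ) : ℂ) * Complex.I)) := by
        rw [Real.fourier_eq']
        congr 1; ext ξ
        simp [H]
        ring_nf
      rw [hHt]
      let Φ : ℝ × ℝ → ℂ := fun p => (p.1 : ℂ) + ((-(2 * Real.pi * p.2) : ℝ) : ℂ) * Complex.I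
      have hΦ : Continuous Φ := by fun_prop
      have hΦG : ContinuousOn (G ∘ Φ) {p | 0 ≤ p.1} := by
        refine hG.comp hΦ.continuousOn ?_
        intro p hp
        simpa [Φ] using hp
      have hcomp : IsCompact (Set.Icc (0:ℝ) 1 ×ˢ tsupport ψ) := isCompact_Icc.prod hψ
      obtain ⟨B, hB⟩ := hcomp.exists_bound_of_continuousOn (hΦG.mono (fun p hp => hp.1.1))
      have hm : ∀ σ ∈ Set.Icc (0:ℝ) 1, ∀ ξ, ‖ψ ξ * (Complex.exp (((-(2 * Real.pi * (ξ * t)) : ℝ) : ℂ) * Complex.I)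
        * G (σ + ((-(2 * Real.pi * ξ) : ℝ) : ℂ) * Complex.I))‖ ≤ ‖ψ ξ‖ * B := by
        intro σ hσ ξ
        by_cases h : ξ ∈ tsupport ψ
        · rw [norm_mul, norm_mul, Complex.norm_exp_ofReal_mul_I, one_mul]
          gcongr
          exact hB (σ, ξ) ⟨hσ, h⟩
        · simp [image_eq_zero_of_notMem_tsupport h]
      refine tendsto_integral_filter_of_dominated_convergence (fun ξ => ‖ψ ξ‖ * B) ?_ ?_ ?_ ?_
      · filter_upwards [self_mem_nhdsWithin] with σ hσ
        refine Continuous.aestronglyMeasurable ?_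
        refine ψ.continuous.mul (Continuous.mul (by fun_prop) ?_)
        have : Continuous (fun ξ : ℝ => (σ, ξ)) := by fun_prop
        exact hΦG.comp_continuous this (fun ξ => (le_of_lt hσ : (0:ℝ) ≤ σ))
      · filter_upwards [Ioc_mem_nhdsGT (zero_lt_one' ℝ)] with σ hσ
        exact Eventually.of_forall fun ξ => hm σ ⟨hσ.1.le, hσ.2⟩ ξ
      · exact ψ.integrable.norm.mul_const B
      · refine Eventually.of_forall fun ξ => ?_
        refine Tendsto.const_mul _ (Tendsto.const_mul _ ?_)
        have h1 : ContinuousWithinAt (G ∘ Φ) {p | 0 ≤ p.1} (0, ξ) := hΦG _ (by simp)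
        have h2 : Tendsto (fun σ : ℝ => (σ, ξ)) (𝓝[>] 0) (𝓝[{p | 0 ≤ p.1}] (0, ξ)) := by
          refine tendsto_nhdsWithin_iff.2 ⟨?_, ?_⟩
          · refine tendsto_nhdsWithin_of_tendsto_nhds ?_
            exact Continuous.tendsto (by fun_prop) 0
          · filter_upwards [self_mem_nhdsWithin] with σ hσ
            exact le_of_lt hσ
        exact h1.tendsto.comp h2
    refine tendsto_nhds_unique lim1 (lim2.congr' ?_)
    filter_upwards [self_mem_nhdsWithin] with σ hσ
    exact (hdual σ hσ).symm
  simp_rw [key]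
  exact (Real.zero_at_infty_fourier H).mono_left atTop_le_cocompact

open MeasureTheory FourierTransform Topology SchwartzMap in
/-- A Tauberian theorem of Wiener–Ikehara type. The averages in `tauber_core`, taken with the kernel
rescaled to width `1 / l`, differ from `f` by `O(1 / l)` because `f` is Lipschitz up to an
exponentially small error. -/
lemma tauber (f : ℝ → ℂ) (hfm : Measurable f)
    (C : ℝ) (hfC : ∀ t, ‖f t‖ ≤ C) (f0 : ∀ t < 0, f t = 0) (G : ℂ → ℂ)
    (hG : ContinuousOn G {s | 0 ≤ s.re})
    (hF : ∀ s : ℂ, 0 < s.re → ∫ u : ℝ, Complex.exp (-s * u) * f u = G s)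
    (hL : ∀ t ≥ 1, ∀ t', ‖f t - f t'‖ ≤ 2 * |t - t'| + Real.exp (-t)) :
    Tendsto f atTop (𝓝 0) := by
  obtain ⟨ψ, hψ, hψ1⟩ := tauber_kernel
  set K : 𝓢(ℝ, ℂ) := 𝓕 ψ with hK
  set A : ℝ := ∫ v, ‖v‖ * ‖K v‖ with hA
  set B : ℝ := ∫ v, ‖K v‖ with hB
  have hA0 : 0 ≤ A := integral_nonneg fun v => by positivity
  have hB0 : 0 ≤ B := integral_nonneg fun v => by positivity
  have iA : Integrable (fun v => ‖v‖ * ‖K v‖) := by simpa using K.integrable_pow_mul volume 1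
  have iB : Integrable (fun v => ‖K v‖) := K.integrable.norm
  -- `l` is the dilation factor of the kernel
  have main : ∀ l : ℝ, 0 < l → ∀ ε > 0, ∀ᶠ t in atTop, ‖f t‖ ≤ ε + 2 * A / l + Real.exp (-t) * B := by
    intro l hl ε hε
    have h1 := tauber_core ψ hψ (fun t => f (t / l)) (by fun_prop) C (fun t => hfC _)
      (fun t ht => f0 _ (div_neg_of_neg_of_pos ht hl)) (fun s => l * G (l * s)) (by
        refine continuousOn_const.mul (hG.comp (by fun_prop) ?_)
        intro s hs
        have hs' : 0 ≤ s.re := hs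
        simpa using mul_nonneg hl.le hs') (by
        intro s hs
        rw [← hF _ (by simpa using mul_pos hl hs)]
        have := Measure.integral_comp_div (fun u : ℝ => Complex.exp (-(l * s) * u) * f u) l
        rw [abs_of_pos hl] at this
        rw [← Complex.real_smul, ← this]
        congr 1; ext u
        congr 2
        have hl' : (l : ℂ) ≠ 0 := by exact_mod_cast hl.ne'
        push_cast
        field_simp)
    have h2 : Tendsto (fun t : ℝ => t * l) atTop atTop := tendsto_id.atTop_mul_const hl
    have h3 := h1.comp h2
    filter_upwards [(tendsto_zero_iff_norm_tendsto_zero.1 h3).eventually_lt_const hε, eventually_ge_atTop 1] with t ht ht1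
    simp only [Function.comp] at ht
    have iKf : Integrable (fun v => K v * f ((t * l - v) / l)) := by
      refine Integrable.mono' (iB.mul_const C) ?_ ?_
      · exact K.continuous.aestronglyMeasurable.mul (Measurable.aestronglyMeasurable (by fun_prop))
      · exact Eventually.of_forall fun v => by rw [norm_mul]; gcongr; exact hfC _
    have h4 : f t = (∫ v, K v * f ((t * l - v) / l)) + ∫ v, K v * (f t - f ((t * l - v) / l)) := by
      rw [← integral_add iKf]
      · have : ∀ v, K v * f ((t * l - v) / l) + K v * (f t - f ((t * l - v) / l)) = K v * f t := fun v => by ring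
        simp_rw [this]
        rw [integral_mul_const, hψ1, one_mul]
      · simp_rw [mul_sub]
        exact (K.integrable.mul_const _).sub iKf
    have h5 : ‖∫ v, K v * (f t - f ((t * l - v) / l))‖ ≤ ∫ v, ((2 / l) * (‖v‖ * ‖K v‖) + Real.exp (-t) * ‖K v‖) := by
      refine norm_integral_le_of_norm_le ((iA.const_mul _).add (iB.const_mul _)) ?_
      refine Eventually.of_forall fun v => ?_
      rw [norm_mul]
      have := hL t ht1 ((t * l - v) / l)
      have e : t - (t * l - v) / l = v / l := by field_simp; ring
      rw [e, abs_div, abs_of_pos hl] at this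
      calc _ ≤ ‖K v‖ * (2 * (|v| / l) + Real.exp (-t)) := by gcongr
        _ = _ := by rw [Real.norm_eq_abs]; ring
    rw [integral_add (iA.const_mul _) (iB.const_mul _), integral_const_mul, integral_const_mul, ← hA, ← hB] at h5
    calc ‖f t‖ ≤ ‖∫ v, K v * f ((t * l - v) / l)‖ + ‖∫ v, K v * (f t - f ((t * l - v) / l))‖ := by
          conv_lhs => rw [h4]
          exact norm_add_le _ _
      _ ≤ ε + (2 / l * A + Real.exp (-t) * B) := add_le_add ht.le h5
      _ = _ := by ring
  rw [Metric.tendsto_nhds]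
  intro ε hε
  have hl : 0 < 8 * A / ε + 1 := by positivity
  have h6 : Tendsto (fun t : ℝ => Real.exp (-t) * B) atTop (𝓝 0) := by
    simpa using (Real.tendsto_exp_neg_atTop_nhds_zero).mul_const B
  filter_upwards [main _ hl (ε / 4) (by positivity), h6.eventually_lt_const (show 0 < ε / 4 by positivity)] with t h7 h8
  have h9 : 2 * A / (8 * A / ε + 1) ≤ ε / 4 := by
    rw [div_le_iff₀ hl]
    field_simp
    nlinarith
  rw [dist_zero_right]
  linarith

/-! ### Mean values of bounded sequences and Dirichlet series -/

lemma norm_sum_Icc_le {a : ℕ → ℂ} (ha : ∀ n, ‖a n‖ ≤ 1) (N : ℕ) : ‖∑ n ∈ Icc 1 N, a n‖ ≤ N := by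
  calc _ ≤ ∑ n ∈ Icc 1 N, (1 : ℝ) := norm_sum_le_of_le _ fun n _ => ha n
    _ = N := by simp

lemma norm_sum_sub_le {a : ℕ → ℂ} (ha : ∀ n, ‖a n‖ ≤ 1) {x y : ℝ} (hx : 0 ≤ x) (hxy : x ≤ y) :
    ‖∑ n ∈ Icc 1 ⌊y⌋₊, a n - ∑ n ∈ Icc 1 ⌊x⌋₊, a n‖ ≤ y - x + 1 := by
  have hfl : ⌊x⌋₊ ≤ ⌊y⌋₊ := Nat.floor_mono hxy
  have hs : Icc 1 ⌊x⌋₊ ⊆ Icc 1 ⌊y⌋₊ := Icc_subset_Icc le_rfl hfl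
  rw [← Finset.sum_sdiff hs, add_sub_cancel_right]
  have hc : #(Icc 1 ⌊y⌋₊ \ Icc 1 ⌊x⌋₊) = ⌊y⌋₊ - ⌊x⌋₊ := by
    rw [card_sdiff_of_subset hs]; simp
  calc _ ≤ ∑ n ∈ Icc 1 ⌊y⌋₊ \ Icc 1 ⌊x⌋₊, (1 : ℝ) := norm_sum_le_of_le _ fun n _ => ha n
    _ = (⌊y⌋₊ : ℝ) - ⌊x⌋₊ := by simp [hc, Nat.cast_sub hfl]
    _ ≤ _ := by
      have h1 := Nat.floor_le (hx.trans hxy)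
      have h2 := Nat.lt_floor_add_one x
      linarith

open MeasureTheory Topology in
/-- A bounded sequence whose Dirichlet series extends continuously to the closed half-plane
`1 ≤ re s` has mean value zero: `tauber` is applied to `f t = exp (-t) * ∑_{n ≤ exp t} a n`, whose
Laplace transform is `G (s + 1) / (s + 1)`. -/
lemma meanZero_of_LSeries (a : ℕ → ℂ) (ha : ∀ n, ‖a n‖ ≤ 1) (G : ℂ → ℂ)
    (hG : ContinuousOn G {s | 1 ≤ s.re}) (hF : ∀ s : ℂ, 1 < s.re → LSeries a s = G s) :
    MeanZero a := by
  set S : ℝ → ℂ := fun x => ∑ n ∈ Icc 1 ⌊x⌋₊, a n with hS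
  have hSm : Measurable S :=
    (measurable_from_nat (f := fun N => ∑ n ∈ Icc 1 N, a n)).comp Nat.measurable_floor
  have hSle : ∀ x ≥ 0, ‖S x‖ ≤ x := fun x hx =>
    (norm_sum_Icc_le ha _).trans (Nat.floor_le hx)
  set f : ℝ → ℂ := (Set.Ici (0:ℝ)).indicator (fun t => (Real.exp (-t) : ℂ) * S (Real.exp t)) with hf
  have hfpos : ∀ t ≥ 0, f t = (Real.exp (-t) : ℂ) * S (Real.exp t) := fun t ht =>
    Set.indicator_of_mem (show t ∈ Set.Ici (0:ℝ) from ht) _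
  have hfneg : ∀ t < 0, f t = 0 := fun t ht => Set.indicator_of_notMem (by simpa using ht) _
  have hfb : ∀ t, ‖f t‖ ≤ 1 := by
    intro t
    rcases lt_or_ge t 0 with ht | ht
    · simp [hfneg t ht]
    · rw [hfpos t ht, norm_mul, Complex.norm_real, Real.norm_eq_abs, Real.abs_exp]
      calc _ ≤ Real.exp (-t) * Real.exp t := by gcongr; exact hSle _ (Real.exp_pos _).le
        _ = 1 := by rw [← Real.exp_add]; simp
  -- one-sided estimate for two arguments in increasing order
  have hlip : ∀ t ≥ 0, ∀ t' ≥ t, ‖f t' - f t‖ ≤ 2 * (t' - t) + Real.exp (-t') := by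
    intro t ht t' htt
    rw [hfpos t ht, hfpos t' (ht.trans htt)]
    have e : (Real.exp (-t') : ℂ) * S (Real.exp t') - (Real.exp (-t) : ℂ) * S (Real.exp t)
        = (Real.exp (-t') : ℂ) * (S (Real.exp t') - S (Real.exp t))
          - ((Real.exp (-t) - Real.exp (-t') : ℝ) : ℂ) * S (Real.exp t) := by
      push_cast; ring
    rw [e]
    have h1 := norm_sum_sub_le ha (Real.exp_pos t).le (Real.exp_le_exp.2 htt)
    have h2 := hSle _ (Real.exp_pos t).le
    have h3 : Real.exp (-t') ≤ Real.exp (-t) := Real.exp_le_exp.2 (by linarith)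
    have h4 : Real.exp (-t') * Real.exp t = Real.exp (-(t' - t)) := by
      rw [← Real.exp_add]; ring_nf
    have h5 : Real.exp (-t') * Real.exp t' = 1 := by rw [← Real.exp_add]; simp
    have h6 : Real.exp (-t) * Real.exp t = 1 := by rw [← Real.exp_add]; simp
    have h7 := Real.add_one_le_exp (-(t' - t))
    refine (norm_sub_le _ _).trans ?_
    rw [norm_mul, norm_mul, Complex.norm_real, Complex.norm_real, Real.norm_eq_abs,
      Real.norm_eq_abs, Real.abs_exp, abs_of_nonneg (sub_nonneg.2 h3)]
    calc _ ≤ Real.exp (-t') * (Real.exp t' - Real.exp t + 1)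
          + (Real.exp (-t) - Real.exp (-t')) * Real.exp t := by
          gcongr
      _ = 2 - 2 * Real.exp (-(t' - t)) + Real.exp (-t') := by
          rw [← h4]; linear_combination h5 + h6
      _ ≤ _ := by linarith
  have hlim : Tendsto f atTop (𝓝 0) := by
    refine tauber f ?_ 1 hfb hfneg (fun s => G (s + 1) / (s + 1)) ?_ ?_ ?_
    · exact Measurable.indicator (by fun_prop) measurableSet_Ici
    · refine ContinuousOn.div (hG.comp (by fun_prop) ?_) (by fun_prop) ?_
      · intro s hs
        have hs' : 0 ≤ s.re := hs
        simpa using hs'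
      · intro s hs h
        have hs' : 0 ≤ s.re := hs
        have := congrArg Complex.re h
        simp at this
        linarith
    · intro s hs
      have hs1 : s + 1 ≠ 0 := by
        intro h
        have := congrArg Complex.re h
        simp at this
        linarith
      have h1 : LSeries a (s + 1) = (s + 1) * ∫ t in Set.Ioi (1 : ℝ), S t * t ^ (-((s + 1) + 1)) := by
        refine LSeries_eq_mul_integral' a zero_le_one (by simpa using hs) ?_
        refine Asymptotics.IsBigO.of_bound 1 (Eventually.of_forall fun n => ?_)
        rw [Real.rpow_one, one_mul, Real.norm_of_nonneg (by positivity), Real.norm_of_nonneg (by positivity)]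
        calc _ ≤ ∑ n ∈ Icc 1 n, (1 : ℝ) := sum_le_sum fun n _ => ha n
          _ = n := by simp
      rw [← hF _ (by simpa using hs), h1, mul_div_cancel_left₀ _ hs1]
      have h2 := integral_comp_exp_Ioi (fun y : ℝ => S y * (y : ℂ) ^ (-((s + 1) + 1))) 0
      rw [Real.exp_zero] at h2
      rw [← h2, ← integral_Ici_eq_integral_Ioi, ← integral_indicator measurableSet_Ici]
      congr 1; ext u
      by_cases hu : 0 ≤ u
      · rw [hfpos u hu, Set.indicator_of_mem (show u ∈ Set.Ici (0:ℝ) from hu)]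
        have e : ((Real.exp u : ℝ) : ℂ) ^ (-((s + 1) + 1)) = Complex.exp (u * (-((s + 1) + 1))) := by
          rw [Complex.cpow_def_of_ne_zero (by exact_mod_cast (Real.exp_pos u).ne'),
            ← Complex.ofReal_log (Real.exp_pos u).le, Real.log_exp]
        rw [e, Complex.real_smul, Complex.ofReal_exp, Complex.ofReal_exp]
        have e2 : Complex.exp (-s * u) * Complex.exp ((-u : ℝ) : ℂ)
            = Complex.exp u * Complex.exp (u * (-((s + 1) + 1))) := by
          rw [← Complex.exp_add, ← Complex.exp_add]
          congr 1; push_cast; ring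
        linear_combination S (Real.exp u) * e2
      · rw [hfneg u (not_le.1 hu), Set.indicator_of_notMem (by simpa using hu), mul_zero]
    · intro t ht t'
      rcases lt_or_ge t' 0 with h | h
      · rw [hfneg t' h, sub_zero, abs_of_pos (by linarith)]
        have := hfb t
        have := Real.exp_pos (-t)
        linarith
      · rcases le_total t t' with h' | h'
        · have h1 := hlip t (by linarith) t' h'
          have h2 : Real.exp (-t') ≤ Real.exp (-t) := Real.exp_le_exp.2 (by linarith)
          rw [norm_sub_rev, abs_sub_comm, abs_of_nonneg (by linarith)]
          linarith
        · rw [abs_of_nonneg (by linarith)]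
          exact hlip t' h t h'
  intro ε hε
  rw [Metric.tendsto_nhds] at hlim
  obtain ⟨T, hT⟩ := eventually_atTop.1 (hlim ε hε)
  refine ⟨⌈Real.exp T⌉₊ + 1, fun N hN => ?_⟩
  have hN0 : 0 < (N : ℝ) := by exact_mod_cast (by omega : 0 < N)
  have hN1 : 1 ≤ (N : ℝ) := by exact_mod_cast (by omega : 1 ≤ N)
  have h1 : Real.exp T ≤ N := (Nat.le_ceil _).trans (by exact_mod_cast (by omega))
  have h2 := hT (Real.log N) ((Real.le_log_iff_exp_le hN0).2 h1)
  rw [dist_zero_right, hfpos _ (Real.log_nonneg hN1), Real.exp_log hN0, norm_mul, Complex.norm_real,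
    Real.norm_eq_abs, Real.abs_exp, Real.exp_neg, Real.exp_log hN0, hS] at h2
  simp only [Nat.floor_natCast] at h2
  rw [inv_mul_lt_iff₀ hN0] at h2
  linarith

open ArithmeticFunction in
/-- The prime number theorem for characters in terms of the Möbius function. The Dirichlet series of
`χ μ` is `1 / L(s, χ)`, and `L(s, χ)` has no zeros on the line `re s = 1`. For the trivial character
the pole of `L` at `1` is removed by writing `1 / L` as `(s - 1) / ((s - 1) L)`. -/
lemma meanZero_moebius_mul_char {q : ℕ} [NeZero q] (χ : DirichletCharacter ℂ q) :
    MeanZero (fun n => χ n * (moebius n : ℂ)) := by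
  classical
  let G : ℂ → ℂ := fun s => if χ = 1 then (s - 1) / DirichletCharacter.LFunctionTrivChar₁ q s
    else 1 / χ.LFunction s
  refine meanZero_of_LSeries _ ?_ G ?_ ?_
  · intro n
    rw [norm_mul]
    have h1 := χ.norm_le_one n
    have h2 : ‖(moebius n : ℂ)‖ ≤ 1 := by
      rw [Complex.norm_intCast]; exact_mod_cast abs_moebius_le_one
    calc _ ≤ (1:ℝ) * 1 := by gcongr
      _ = 1 := one_mul 1
  · by_cases h : χ = 1
    · simp only [G, h, if_true]
      refine ContinuousOn.div (by fun_prop)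
        (DirichletCharacter.differentiable_LFunctionTrivChar₁ q).continuous.continuousOn ?_
      intro s hs
      rcases eq_or_ne s 1 with rfl | hs1
      · exact DirichletCharacter.LFunctionTrivChar₁_apply_one_ne_zero q
      · rw [DirichletCharacter.LFunctionTrivChar₁, Function.update_of_ne hs1]
        exact mul_ne_zero (sub_ne_zero.2 hs1)
          (DirichletCharacter.LFunction_ne_zero_of_one_le_re _ (Or.inr hs1) hs)
    · simp only [G, h, if_false]
      refine ContinuousOn.div (by fun_prop)
        (DirichletCharacter.differentiable_LFunction h).continuous.continuousOn ?_
      intro s hs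
      exact DirichletCharacter.LFunction_ne_zero_of_one_le_re _ (Or.inl h) hs
  · intro s hs
    have hs1 : s ≠ 1 := by rintro rfl; simp at hs
    have h1 := DirichletCharacter.LSeries.mul_mu_eq_one χ hs
    rw [← DirichletCharacter.LFunction_eq_LSeries χ hs] at h1
    have h2 : LSeries (fun n => χ n * (moebius n : ℂ)) s = 1 / χ.LFunction s :=
      eq_one_div_of_mul_eq_one_right h1
    rw [h2]
    by_cases h : χ = 1
    · simp only [G, h, if_true]
      rw [DirichletCharacter.LFunctionTrivChar₁, Function.update_of_ne hs1, div_mul_eq_div_div, div_self (sub_ne_zero.2 hs1)]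
    · simp only [G, h, if_false]

/-! ### Partial summation and Axer's theorem -/

lemma MeanZero.uniform {a : ℕ → ℂ} (h : MeanZero a) {ε : ℝ} (hε : 0 < ε) :
    ∃ N₀ : ℕ, ∀ N ≥ N₀, ∀ M ≤ N, ‖∑ n ∈ Icc 1 M, a n‖ ≤ ε * N := by
  obtain ⟨N₁, h1⟩ := h ε hε
  set D := ∑ n ∈ Icc 1 N₁, ‖a n‖
  obtain ⟨N₂, h2⟩ := exists_nat_ge (D / ε)
  refine ⟨N₂, fun N hN M hM => ?_⟩
  rcases le_total N₁ M with hc | hc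
  · refine (h1 M hc).trans ?_
    gcongr
  · have hNN : (N₂ : ℝ) ≤ N := by exact_mod_cast hN
    calc _ ≤ ∑ n ∈ Icc 1 M, ‖a n‖ := norm_sum_le _ _
      _ ≤ D := sum_le_sum_of_subset_of_nonneg (Icc_subset_Icc le_rfl hc) fun _ _ _ => norm_nonneg _
      _ ≤ ε * N := by
        rw [div_le_iff₀ hε] at h2
        nlinarith

/-- Abel's inequality: nonincreasing nonnegative weights multiply a bound for partial sums by at most
the first weight. -/
lemma abel_range (a : ℕ → ℂ) (w : ℕ → ℝ) (L : ℕ) {T : ℝ}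
    (hS : ∀ j ≤ L + 1, ‖∑ i ∈ range j, a i‖ ≤ T) (hw : 0 ≤ w L)
    (hanti : ∀ i < L, w (i + 1) ≤ w i) :
    ‖∑ i ∈ range (L + 1), (w i : ℂ) * a i‖ ≤ T * w 0 := by
  have key : ∀ j ≤ L, ‖∑ i ∈ range (j + 1), (w i : ℂ) * a i - w j * ∑ i ∈ range (j + 1), a i‖
      ≤ T * (w 0 - w j) := by
    intro j
    induction j with
    | zero => intro _; simp
    | succ j ih =>
      intro hj
      have e : ∑ i ∈ range (j + 1 + 1), (w i : ℂ) * a i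
          - w (j + 1) * ∑ i ∈ range (j + 1 + 1), a i
          = (∑ i ∈ range (j + 1), (w i : ℂ) * a i - w j * ∑ i ∈ range (j + 1), a i)
          + ((w j - w (j + 1) : ℝ) : ℂ) * ∑ i ∈ range (j + 1), a i := by
        rw [sum_range_succ _ (j + 1), sum_range_succ _ (j + 1)]
        push_cast; ring
      rw [e]
      refine (norm_add_le _ _).trans ?_
      have h1 := ih (by omega)
      have h2 := hS (j + 1) (by omega)
      have h3 := sub_nonneg.2 (hanti j (by omega))
      rw [norm_mul, Complex.norm_real, Real.norm_of_nonneg h3]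
      nlinarith [mul_le_mul_of_nonneg_left h2 h3]
  have h1 := key L le_rfl
  have h2 := hS (L + 1) le_rfl
  have e : ∑ i ∈ range (L + 1), (w i : ℂ) * a i
      = (∑ i ∈ range (L + 1), (w i : ℂ) * a i - w L * ∑ i ∈ range (L + 1), a i)
        + w L * ∑ i ∈ range (L + 1), a i := by ring
  rw [e]
  refine (norm_add_le _ _).trans ?_
  rw [norm_mul, Complex.norm_real, Real.norm_of_nonneg hw]
  nlinarith [mul_le_mul_of_nonneg_left h2 hw]

lemma sum_Ioc_eq_range {E : Type*} [AddCommMonoid E] (f : ℕ → E) (A L : ℕ) :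
    ∑ n ∈ Ioc A (A + L), f n = ∑ i ∈ range L, f (A + 1 + i) := by
  rw [show Ioc A (A + L) = Ico (A + 1) (A + L + 1) by ext; simp,
    sum_Ico_eq_sum_range]
  congr 2; omega

lemma sum_Icc_one_add_Ioc {E : Type*} [AddCommMonoid E] (f : ℕ → E) {A B : ℕ} (h : A ≤ B) :
    ∑ n ∈ Icc 1 A, f n + ∑ n ∈ Ioc A B, f n = ∑ n ∈ Icc 1 B, f n := by
  rw [← sum_union]
  · congr 1; ext; simp; omega
  · rw [disjoint_left]; intro x; simp; omega

lemma abel_Ioc (a : ℕ → ℂ) (w : ℕ → ℝ) {A B : ℕ} {T W : ℝ}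
    (hS : ∀ M ≤ B, ‖∑ n ∈ Icc 1 M, a n‖ ≤ T)
    (hw : ∀ n, A < n → n ≤ B → 0 ≤ w n)
    (hanti : ∀ m n, A < m → m ≤ n → n ≤ B → w n ≤ w m) (hW : 0 ≤ W)
    (hwW : ∀ n, A < n → n ≤ B → w n ≤ W) :
    ‖∑ n ∈ Ioc A B, (w n : ℂ) * a n‖ ≤ 2 * T * W := by
  have hT : 0 ≤ T := (norm_nonneg _).trans (hS 0 (Nat.zero_le _))
  rcases le_or_gt B A with h | h
  · rw [Ioc_eq_empty (by omega)]; simp; positivity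
  obtain ⟨L, rfl⟩ : ∃ L, B = A + (L + 1) := ⟨B - A - 1, by omega⟩
  rw [sum_Ioc_eq_range]
  have := abel_range (fun i => a (A + 1 + i)) (fun i => w (A + 1 + i)) L (T := 2 * T) ?_ ?_ ?_
  · refine this.trans ?_
    have := hwW (A + 1) (by omega) (by omega)
    simp only [add_zero]
    gcongr
  · intro j hj
    rw [← sum_Ioc_eq_range]
    have e := sum_Icc_one_add_Ioc a (show A ≤ A + j by omega)
    rw [← eq_sub_iff_add_eq'] at e
    rw [e]
    refine (norm_sub_le _ _).trans ?_
    have := hS (A + j) (by omega)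
    have := hS A (by omega)
    linarith
  · exact hw _ (by omega) (by omega)
  · intro i hi; exact hanti _ _ (by omega) (by omega) (by omega)

lemma sum_inv_sqrt_le (M : ℕ) : ∑ n ∈ Icc 1 M, 1 / √(n : ℝ) ≤ 2 * √(M : ℝ) := by
  induction M with
  | zero => simp
  | succ M ih =>
    rw [sum_Icc_succ_top (by omega)]
    have h0 : 0 < √((M + 1 : ℕ) : ℝ) := Real.sqrt_pos.2 (by positivity)
    have h1 : √((M + 1 : ℕ) : ℝ) ^ 2 = M + 1 := by rw [Real.sq_sqrt (by positivity)]; simp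
    have h2 : √(M : ℝ) ^ 2 = M := Real.sq_sqrt (by positivity)
    have h4 : 1 / √((M + 1 : ℕ) : ℝ) ≤ 2 * (√((M + 1 : ℕ) : ℝ) - √(M : ℝ)) := by
      rw [div_le_iff₀ h0]
      nlinarith [sq_nonneg (√((M + 1 : ℕ) : ℝ) - √(M : ℝ))]
    linarith

/-- Axer's theorem. For `n ≤ N / K` the growth bound on `B` gives a contribution `O(N / √K)`. For
`n > N / K` the argument `N / n` stays in `[1, K]`, where `B` is a combination of monotone functions,
and partial summation against the mean-zero sequence `a` gives `o(N)`. -/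
lemma axer (a : ℕ → ℂ) (ha : ∀ n, ‖a n‖ ≤ 1) (hm : MeanZero a) (B : ℝ → ℂ) (C : ℝ)
    (hB : ∀ y ≥ 1, ‖B y‖ ≤ C * √y)
    (hdec : ∀ K : ℕ, ∃ (J : Finset ℕ) (c : ℕ → ℂ) (m : ℕ → ℝ → ℝ), (∀ j, Monotone (m j)) ∧
      (∀ j, ∀ y ≥ 1, 0 ≤ m j y) ∧ ∀ y : ℝ, 1 ≤ y → y ≤ K → B y = ∑ j ∈ J, c j * m j y) :
    ∀ ε > 0, ∃ N₀ : ℕ, ∀ N ≥ N₀, ‖∑ n ∈ Icc 1 N, a n * B (N / n)‖ ≤ ε * N := by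
  intro ε hε
  have hC : 0 ≤ C := by
    have := (norm_nonneg _).trans (hB 1 le_rfl); simpa using this
  obtain ⟨K, hK⟩ := exists_nat_ge (max 1 ((4 * C / ε) ^ 2))
  have hK1 : (1 : ℝ) ≤ K := (le_max_left _ _).trans hK
  have hK2 : 4 * C / ε ≤ √(K : ℝ) := Real.le_sqrt_of_sq_le ((le_max_right _ _).trans hK)
  obtain ⟨J, c, m, hmon, hpos, hBK⟩ := hdec K
  set D := ∑ j ∈ J, ‖c j‖ * m j K with hD
  have hD0 : 0 ≤ D := sum_nonneg fun j _ => mul_nonneg (norm_nonneg _) (hpos _ _ hK1)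
  have hε' : 0 < ε / (4 * (D + 1)) := by positivity
  obtain ⟨N₀, hN₀⟩ := hm.uniform hε'
  refine ⟨N₀, fun N hN => ?_⟩
  set A := N / K with hA
  have hKn : 0 < K := by exact_mod_cast hK1
  have hAN : A ≤ N := Nat.div_le_self _ _
  rw [← sum_Icc_one_add_Ioc _ hAN]
  have p1 : ‖∑ n ∈ Icc 1 A, a n * B (N / n)‖ ≤ ε / 2 * N := by
    calc _ ≤ ∑ n ∈ Icc 1 A, C * √(N : ℝ) * (1 / √(n : ℝ)) := by
          refine norm_sum_le_of_le _ fun n hn => ?_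
          rw [mem_Icc] at hn
          have hn0 : (0 : ℝ) < n := by exact_mod_cast hn.1
          have h1 : (1 : ℝ) ≤ N / n := by
            rw [one_le_div hn0]; exact_mod_cast hn.2.trans hAN
          have := hB _ h1
          rw [Real.sqrt_div (by positivity)] at this
          rw [norm_mul]
          calc _ ≤ 1 * (C * (√(N : ℝ) / √(n : ℝ))) := by gcongr; exact ha n
            _ = _ := by ring
      _ = C * √(N : ℝ) * ∑ n ∈ Icc 1 A, 1 / √(n : ℝ) := by rw [mul_sum]
      _ ≤ C * √(N : ℝ) * (2 * √(A : ℝ)) := by gcongr; exact sum_inv_sqrt_le A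
      _ ≤ C * √(N : ℝ) * (2 * (√(N : ℝ) / √(K : ℝ))) := by
          rw [← Real.sqrt_div (by positivity)]
          gcongr
          exact Nat.cast_div_le
      _ = 2 * C / √(K : ℝ) * N := by
          have : √(N : ℝ) * √(N : ℝ) = N := Real.mul_self_sqrt (by positivity)
          linear_combination (2 * C / √(K : ℝ)) * this
      _ ≤ _ := by
          refine mul_le_mul_of_nonneg_right ?_ (Nat.cast_nonneg N)
          have : 0 < √(K : ℝ) := Real.sqrt_pos.2 (by linarith)
          rw [div_le_iff₀ this]
          rw [div_le_iff₀ hε] at hK2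
          linarith
  have p2 : ‖∑ n ∈ Ioc A N, a n * B (N / n)‖ ≤ ε / 2 * N := by
    have hr : ∀ n, A < n → n ≤ N → (1 : ℝ) ≤ N / n ∧ (N : ℝ) / n ≤ K := by
      intro n h1 h2
      have hn0 : (0 : ℝ) < n := by exact_mod_cast (Nat.zero_le _).trans_lt h1
      rw [one_le_div hn0, div_le_iff₀ hn0]
      refine ⟨by exact_mod_cast h2, ?_⟩
      rw [hA, Nat.div_lt_iff_lt_mul hKn] at h1
      rw [mul_comm]
      exact_mod_cast h1.le
    have e : ∑ n ∈ Ioc A N, a n * B (N / n)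
        = ∑ j ∈ J, c j * ∑ n ∈ Ioc A N, ((m j (N / n) : ℝ) : ℂ) * a n := by
      simp_rw [mul_sum]
      rw [sum_comm]
      refine sum_congr rfl fun n hn => ?_
      rw [mem_Ioc] at hn
      obtain ⟨h1, h2⟩ := hr n hn.1 hn.2
      rw [hBK _ h1 h2, mul_sum]
      exact sum_congr rfl fun j _ => by ring
    rw [e]
    calc _ ≤ ∑ j ∈ J, ‖c j‖ * (2 * (ε / (4 * (D + 1)) * N) * m j K) := by
          refine norm_sum_le_of_le _ fun j _ => ?_
          rw [norm_mul]
          gcongr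
          refine abel_Ioc a (fun n => m j (N / n)) (hN₀ N hN) ?_ ?_ (hpos _ _ hK1) ?_
          · exact fun n h1 h2 => hpos _ _ (hr n h1 h2).1
          · intro p n h1 h2 h3
            apply hmon
            have : (0 : ℝ) < p := by exact_mod_cast (Nat.zero_le _).trans_lt h1
            gcongr
          · exact fun n h1 h2 => hmon _ (hr n h1 h2).2
      _ = 2 * (ε / (4 * (D + 1)) * N) * D := by
          rw [hD, mul_sum]; exact sum_congr rfl fun j _ => by ring
      _ = ε / 2 * N * (D / (D + 1)) := by field_simp; ring
      _ ≤ ε / 2 * N * 1 := by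
          gcongr
          rw [div_le_one (by positivity)]; linarith
      _ = _ := mul_one _
  refine (norm_add_le _ _).trans ?_
  linarith

/-! ### The prime number theorem in arithmetic progressions -/

lemma MeanZero.congr {a b : ℕ → ℂ} (h : MeanZero a) (hab : ∀ n ≥ 1, a n = b n) : MeanZero b := by
  intro ε hε
  obtain ⟨N₀, h0⟩ := h ε hε
  refine ⟨N₀, fun N hN => ?_⟩
  rw [← sum_congr rfl fun n hn => hab n (mem_Icc.1 hn).1]
  exact h0 N hN

lemma MeanZero.add {a b : ℕ → ℂ} (h : MeanZero a) (h' : MeanZero b) :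
    MeanZero (fun n => a n + b n) := by
  intro ε hε
  obtain ⟨N₀, h0⟩ := h (ε / 2) (by positivity)
  obtain ⟨N₁, h1⟩ := h' (ε / 2) (by positivity)
  refine ⟨max N₀ N₁, fun N hN => ?_⟩
  rw [sum_add_distrib]
  refine (norm_add_le _ _).trans ?_
  have := h0 N (le_of_max_le_left hN)
  have := h1 N (le_of_max_le_right hN)
  linarith

lemma MeanZero.const_mul {a : ℕ → ℂ} (h : MeanZero a) (c : ℂ) : MeanZero (fun n => c * a n) := by
  intro ε hε
  obtain ⟨N₀, h0⟩ := h (ε / (‖c‖ + 1)) (by positivity)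
  refine ⟨N₀, fun N hN => ?_⟩
  rw [← mul_sum, norm_mul]
  calc _ ≤ (‖c‖ + 1) * (ε / (‖c‖ + 1) * N) := by
        gcongr
        · linarith
        · exact h0 N hN
    _ = _ := by field_simp

lemma MeanZero.finset_sum {ι : Type*} (s : Finset ι) {a : ι → ℕ → ℂ}
    (h : ∀ i ∈ s, MeanZero (a i)) : MeanZero (fun n => ∑ i ∈ s, a i n) := by
  classical
  induction s using Finset.induction_on with
  | empty =>
    intro ε hε
    exact ⟨0, fun N _ => by simp; positivity⟩
  | insert i s hi ih =>
    refine ((h i (mem_insert_self _ _)).add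
      (ih fun j hj => h j (mem_insert_of_mem hj))).congr fun n _ => ?_
    rw [sum_insert hi]

lemma meanZero_of_le_sqrt {a : ℕ → ℂ} (C : ℝ) (h : ∀ N : ℕ, ‖∑ n ∈ Icc 1 N, a n‖ ≤ C * √(N : ℝ)) :
    MeanZero a := by
  intro ε hε
  obtain ⟨N₀, h0⟩ := exists_nat_ge ((C / ε) ^ 2)
  refine ⟨N₀, fun N hN => (h N).trans ?_⟩
  have h1 : C / ε ≤ √(N : ℝ) := Real.le_sqrt_of_sq_le (h0.trans (by exact_mod_cast hN))
  rw [div_le_iff₀ hε] at h1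
  have h2 : √(N : ℝ) * √(N : ℝ) = N := Real.mul_self_sqrt (by positivity)
  nlinarith [Real.sqrt_nonneg (N : ℝ), mul_le_mul_of_nonneg_right h1 (Real.sqrt_nonneg (N : ℝ))]

lemma meanZero_of_finite {a : ℕ → ℂ} (k : ℕ) (h : ∀ n > k, a n = 0) : MeanZero a := by
  have hD : ∀ N, ‖∑ n ∈ Icc 1 N, a n‖ ≤ ∑ n ∈ Icc 1 k, ‖a n‖ := by
    intro N
    refine (norm_sum_le _ _).trans ?_
    rw [← sum_filter_add_sum_filter_not (Icc 1 N) (· ≤ k)]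
    have : ∑ n ∈ (Icc 1 N).filter (fun n => ¬ n ≤ k), ‖a n‖ = 0 :=
      sum_eq_zero fun n hn => by
        rw [mem_filter] at hn
        rw [h n (by omega), norm_zero]
    rw [this, add_zero]
    refine sum_le_sum_of_subset_of_nonneg (fun n hn => ?_) fun _ _ _ => norm_nonneg _
    simp only [mem_filter, mem_Icc] at hn ⊢
    omega
  refine meanZero_of_le_sqrt (∑ n ∈ Icc 1 k, ‖a n‖) fun N => ?_
  rcases Nat.eq_zero_or_pos N with rfl | hN
  · simp
  · refine (hD N).trans ?_
    refine le_mul_of_one_le_right (sum_nonneg fun _ _ => norm_nonneg _) ?_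
    rw [Real.one_le_sqrt]
    exact_mod_cast hN

/-- Dirichlet's rearrangement of the summatory function of a convolution. -/
lemma sum_conv (a b : ℕ → ℂ) (N : ℕ) :
    ∑ n ∈ Icc 1 N, ∑ d ∈ n.divisorsAntidiagonal, a d.1 * b d.2
      = ∑ n ∈ Icc 1 N, a n * ∑ m ∈ Icc 1 (N / n), b m := by
  let f : ArithmeticFunction ℂ := ⟨fun n => if n = 0 then 0 else a n, by simp⟩
  let g : ArithmeticFunction ℂ := ⟨fun n => if n = 0 then 0 else b n, by simp⟩
  have hf : ∀ n ≠ 0, f n = a n := fun n hn => if_neg hn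
  have hg : ∀ n ≠ 0, g n = b n := fun n hn => if_neg hn
  have h := ArithmeticFunction.sum_Ioc_mul_eq_sum_sum f g N
  have hI : ∀ M, Ioc 0 M = Icc 1 M := fun M => by ext; simp [Nat.succ_le_iff]
  simp only [hI] at h
  have e1 : ∑ n ∈ Icc 1 N, ∑ d ∈ n.divisorsAntidiagonal, a d.1 * b d.2
      = ∑ n ∈ Icc 1 N, (f * g) n := by
    refine sum_congr rfl fun n _ => ?_
    rw [ArithmeticFunction.mul_apply]
    refine sum_congr rfl fun d hd => ?_
    rw [hf _ (Nat.left_ne_zero_of_mem_divisorsAntidiagonal hd),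
      hg _ (Nat.right_ne_zero_of_mem_divisorsAntidiagonal hd)]
  rw [e1, h]
  refine sum_congr rfl fun n hn => ?_
  rw [hf n (by rw [mem_Icc] at hn; omega)]
  congr 1
  refine sum_congr rfl fun m hm => ?_
  rw [hg m (by rw [mem_Icc] at hm; omega)]

/-- Partial sums of a nontrivial character are bounded, since the sum over a period vanishes. -/
lemma norm_sum_char_le {q : ℕ} [NeZero q] {χ : DirichletCharacter ℂ q} (hχ : χ ≠ 1) (N : ℕ) :
    ‖∑ n ∈ Icc 1 N, χ n‖ ≤ q := by
  have h0 : ∑ i ∈ range q, χ (i : ZMod q) = 0 := by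
    rw [← MulChar.sum_eq_zero_of_ne_one hχ]
    refine sum_bij' (fun i _ => (i : ZMod q)) (fun z _ => z.val) ?_ ?_ ?_ ?_ ?_
    · simp
    · intro z _; simpa using ZMod.val_lt z
    · intro i hi; exact ZMod.val_cast_of_lt (by simpa using hi)
    · intro z _; simp
    · simp
  have h1 : ∀ t s, ∑ i ∈ range (q * t + s), χ (i : ZMod q) = ∑ i ∈ range s, χ (i : ZMod q) := by
    intro t
    induction t with
    | zero => simp
    | succ t ih =>
      intro s
      rw [show q * (t + 1) + s = q * t + (q + s) by ring, ih, sum_range_add, h0, zero_add]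
      simp
  have h2 : ∀ M, ∑ i ∈ range M, χ (i : ZMod q) = ∑ i ∈ range (M % q), χ (i : ZMod q) := by
    intro M
    conv_lhs => rw [← Nat.div_add_mod M q]
    exact h1 _ _
  have h3 : ∑ n ∈ Icc 1 N, χ n = ∑ i ∈ range N, χ ((1 + i : ℕ) : ZMod q) := by
    rw [show Icc 1 N = Ico 1 (N + 1) by ext; simp, sum_Ico_eq_sum_range]; simp
  by_cases hq : q = 1
  · subst hq
    exact absurd (Subsingleton.elim χ 1) hχ
  have h4 : ∑ n ∈ Icc 1 N, χ n = ∑ i ∈ range (N + 1), χ (i : ZMod q) := by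
    have : Fact (1 < q) := ⟨by have := NeZero.ne q; omega⟩
    rw [h3, sum_range_succ', Nat.cast_zero, χ.map_nonunit (by simp), add_zero]
    exact sum_congr rfl fun i _ => by rw [add_comm]
  rw [h4, h2]
  calc _ ≤ ∑ i ∈ range ((N + 1) % q), (1 : ℝ) := norm_sum_le_of_le _ fun i _ => χ.norm_le_one _
    _ = ((N + 1) % q : ℕ) := by simp
    _ ≤ q := by exact_mod_cast (Nat.mod_lt _ (NeZero.pos q)).le

lemma log_le_two_sqrt {y : ℝ} (hy : 1 ≤ y) : Real.log y ≤ 2 * √y := by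
  have h0 : 0 < √y := Real.sqrt_pos.2 (by linarith)
  have h1 := Real.log_le_sub_one_of_pos h0
  rw [Real.log_sqrt (by linarith)] at h1
  linarith

lemma norm_sum_char_log_le {q : ℕ} [NeZero q] {χ : DirichletCharacter ℂ q} (hχ : χ ≠ 1) (M : ℕ) :
    ‖∑ n ∈ Icc 1 M, χ n * (Real.log n : ℂ)‖ ≤ 6 * q * √(M : ℝ) := by
  rcases Nat.eq_zero_or_pos M with rfl | hM
  · simp
  have hM1 : (1 : ℝ) ≤ M := by exact_mod_cast hM
  have hl : 0 ≤ Real.log M := Real.log_nonneg hM1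
  have h1 := abel_Ioc (fun n => χ n) (fun n => Real.log M - Real.log n) (A := 0) (B := M)
    (W := Real.log M) (fun N _ => norm_sum_char_le hχ N) ?_ ?_ hl ?_
  · have h2 := norm_sum_char_le hχ M
    have e : ∑ n ∈ Icc 1 M, χ n * (Real.log n : ℂ) = Real.log M * ∑ n ∈ Icc 1 M, χ n
        - ∑ n ∈ Ioc 0 M, ((Real.log M - Real.log n : ℝ) : ℂ) * χ n := by
      rw [show Ioc 0 M = Icc 1 M by ext; simp [Nat.succ_le_iff], mul_sum, ← sum_sub_distrib]
      exact sum_congr rfl fun n _ => by push_cast; ring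
    rw [e]
    refine (norm_sub_le _ _).trans ?_
    rw [norm_mul, Complex.norm_real, Real.norm_of_nonneg hl]
    have h3 := log_le_two_sqrt hM1
    have h4 : (0 : ℝ) ≤ q := by positivity
    nlinarith [mul_le_mul_of_nonneg_left h2 hl, mul_le_mul_of_nonneg_left h3 h4]
  · intro n h1 h2
    have : (0 : ℝ) < n := by exact_mod_cast h1
    exact sub_nonneg.2 (Real.log_le_log this (by exact_mod_cast h2))
  · intro m n h1 h2 _
    have : (0 : ℝ) < m := by exact_mod_cast h1
    exact sub_le_sub_left (Real.log_le_log this (by exact_mod_cast h2)) _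
  · intro n h1 h2
    have : (1 : ℝ) ≤ n := by exact_mod_cast h1
    have := Real.log_nonneg this
    linarith

lemma norm_char_mul_moebius_le {q : ℕ} [NeZero q] (χ : DirichletCharacter ℂ q) (n : ℕ) :
    ‖χ n * (ArithmeticFunction.moebius n : ℂ)‖ ≤ 1 := by
  rw [norm_mul]
  have h1 : ‖(ArithmeticFunction.moebius n : ℂ)‖ ≤ 1 := by
    have := @ArithmeticFunction.abs_moebius_le_one n
    rw [Complex.norm_intCast]
    exact_mod_cast this
  exact mul_le_one₀ (χ.norm_le_one _) (norm_nonneg _) h1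

/-- The prime number theorem for a nontrivial character, in the form `ψ(N, χ) = o(N)`. Axer's theorem
is applied to the convolution `χ Λ = χ μ * χ log`; the second factor has summatory function
`O(√y)`. -/
lemma meanZero_char_vonMangoldt {q : ℕ} [NeZero q] {χ : DirichletCharacter ℂ q} (hχ : χ ≠ 1) :
    MeanZero (fun n => χ n * (ArithmeticFunction.vonMangoldt n : ℂ)) := by
  have h := axer _ (norm_char_mul_moebius_le χ) (meanZero_moebius_mul_char χ)
    (fun y => ∑ b ∈ Icc 1 ⌊y⌋₊, χ b * (Real.log b : ℂ)) (6 * q) ?_ ?_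
  · intro ε hε
    obtain ⟨N₀, h0⟩ := h ε hε
    refine ⟨N₀, fun N hN => ?_⟩
    convert h0 N hN using 2
    simp_rw [Nat.floor_div_eq_div]
    rw [← sum_conv (fun n => χ n * (ArithmeticFunction.moebius n : ℂ))
      (fun b => χ b * (Real.log b : ℂ))]
    refine sum_congr rfl fun n _ => ?_
    rw [← ArithmeticFunction.moebius_mul_log_eq_vonMangoldt, ArithmeticFunction.mul_apply]
    push_cast
    rw [mul_sum]
    refine sum_congr rfl fun d hd => ?_
    rw [← (Nat.mem_divisorsAntidiagonal.1 hd).1, Nat.cast_mul, map_mul]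
    simp
    ring
  · intro y hy
    refine (norm_sum_char_log_le hχ _).trans ?_
    gcongr
    exact Nat.floor_le (by linarith)
  · intro K
    refine ⟨Icc 1 K, fun b => χ b * (Real.log b : ℂ), fun b y => if (b : ℝ) ≤ y then 1 else 0,
      ?_, ?_, ?_⟩
    · intro b x y hxy
      dsimp only
      split_ifs with h1 h2 <;> linarith
    · intro b y _; dsimp only; split_ifs <;> norm_num
    · intro y hy hyK
      have : Icc 1 ⌊y⌋₊ = (Icc 1 K).filter (fun b : ℕ => (b : ℝ) ≤ y) := by
        ext b
        simp only [mem_Icc, mem_filter, Nat.le_floor_iff (show 0 ≤ y by linarith)]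
        constructor
        · rintro ⟨h1, h2⟩; exact ⟨⟨h1, by exact_mod_cast h2.trans hyK⟩, h2⟩
        · rintro ⟨⟨h1, _⟩, h2⟩; exact ⟨h1, h2⟩
      rw [this, sum_filter]
      refine sum_congr rfl fun b _ => ?_
      by_cases hb : (b : ℝ) ≤ y <;> simp [hb]

lemma meanZero_char_log_prime {q : ℕ} [NeZero q] {χ : DirichletCharacter ℂ q} (hχ : χ ≠ 1) :
    MeanZero (fun n => if n.Prime then χ n * (Real.log n : ℂ) else 0) := by
  obtain ⟨C, hC⟩ := Chebyshev.psi_sub_theta_le_mul_sqrt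
  have h1 : MeanZero (fun n => if n.Prime then 0 else
      χ n * (ArithmeticFunction.vonMangoldt n : ℂ)) := by
    refine meanZero_of_le_sqrt C fun N => ?_
    refine le_trans ?_ (hC N)
    rw [Chebyshev.psi_sub_theta_eq_sum_not_prime, Nat.floor_natCast, sum_filter,
      show Ioc 0 N = Icc 1 N by ext; simp [Nat.succ_le_iff]]
    refine norm_sum_le_of_le _ fun n _ => ?_
    by_cases hn : n.Prime
    · simp [hn]
    · simp only [hn, if_false, not_false_eq_true, if_true]
      rw [norm_mul, Complex.norm_real,
        Real.norm_of_nonneg ArithmeticFunction.vonMangoldt_nonneg]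
      exact mul_le_of_le_one_left ArithmeticFunction.vonMangoldt_nonneg (χ.norm_le_one _)
  refine ((meanZero_char_vonMangoldt hχ).add (h1.const_mul (-1))).congr fun n _ => ?_
  by_cases hn : n.Prime
  · simp [hn, ArithmeticFunction.vonMangoldt_apply_prime hn]
  · simp [hn]

/-- The indicator of the residue class `a` minus its mean value on the integers prime to `k`. -/
noncomputable def hres {k : ℕ} (a : ZMod k) (n : ℕ) : ℂ :=
  (if (n : ZMod k) = a then 1 else 0) - 1 / (k.totient : ℂ)

/-- The prime number theorem in arithmetic progressions, in the relative form comparing the residue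
class `a` with the average over all reduced classes. The trivial character contributes only through
the finitely many primes dividing `k`. -/
lemma meanZero_hres_log_prime {k : ℕ} [NeZero k] {a : ZMod k} (ha : IsUnit a) :
    MeanZero (fun n => if n.Prime then hres a n * (Real.log n : ℂ) else 0) := by
  classical
  have hφ : (k.totient : ℂ) ≠ 0 := by
    exact_mod_cast (Nat.totient_pos.2 (NeZero.pos k)).ne'
  have h1 : MeanZero (fun n => if n.Prime then
      ((1 : DirichletCharacter ℂ k) n - 1) * (Real.log n : ℂ) else 0) := by
    refine meanZero_of_finite k fun n hn => ?_
    split_ifs with hp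
    · have : IsUnit (n : ZMod k) := by
        rw [ZMod.isUnit_iff_coprime]
        exact (Nat.Prime.coprime_iff_not_dvd hp).2 fun hd =>
          absurd (Nat.le_of_dvd (NeZero.pos k) hd) (by omega)
      rw [MulChar.one_apply this]; simp
    · rfl
  have h2 : MeanZero (fun n => ∑ χ ∈ (univ : Finset (DirichletCharacter ℂ k)).erase 1,
      χ a⁻¹ * (if n.Prime then χ n * (Real.log n : ℂ) else 0)) :=
    MeanZero.finset_sum _ fun χ hχ => (meanZero_char_log_prime (ne_of_mem_erase hχ)).const_mul _
  refine ((h2.add h1).const_mul (1 / (k.totient : ℂ))).congr fun n _ => ?_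
  by_cases hn : n.Prime
  · simp only [hn, if_true]
    have e := DirichletCharacter.sum_char_inv_mul_char_eq ℂ ha (n : ZMod k)
    rw [← add_sum_erase _ _ (mem_univ (1 : DirichletCharacter ℂ k))] at e
    have h3 : (1 : DirichletCharacter ℂ k) a⁻¹ = 1 := by
      have : IsUnit a⁻¹ := by
        obtain ⟨u, rfl⟩ := ha
        rw [ZMod.inv_coe_unit]; exact Units.isUnit _
      exact MulChar.one_apply this
    rw [h3, one_mul] at e
    have e2 : ∑ χ ∈ (univ : Finset (DirichletCharacter ℂ k)).erase 1,
        χ a⁻¹ * (χ n * (Real.log n : ℂ)) =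
        (∑ χ ∈ (univ : Finset (DirichletCharacter ℂ k)).erase 1, χ a⁻¹ * χ n) * Real.log n := by
      rw [sum_mul]; exact sum_congr rfl fun _ _ => by ring
    rw [e2, eq_sub_of_add_eq' e, hres]
    simp only [eq_comm (a := a)]
    split_ifs
    · field_simp; ring
    · field_simp; ring
  · simp [hn]

/-! ### Prime sums, largest prime factors and smooth numbers -/

lemma norm_hres_le {k : ℕ} [NeZero k] (a : ZMod k) (n : ℕ) : ‖hres a n‖ ≤ 1 := by
  have hφ : (1 : ℝ) ≤ k.totient := by exact_mod_cast Nat.totient_pos.2 (NeZero.pos k)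
  have h1 : 1 / (k.totient : ℝ) ≤ 1 := by rw [div_le_one (by linarith)]; exact hφ
  have h0 : 0 ≤ 1 / (k.totient : ℝ) := by positivity
  have : hres a n = (((if (n : ZMod k) = a then 1 else 0) - 1 / (k.totient : ℝ) : ℝ) : ℂ) := by
    rw [hres]; push_cast; split_ifs <;> simp
  rw [this, Complex.norm_real, Real.norm_eq_abs, abs_le]
  split_ifs <;> constructor <;> linarith

lemma eventually_log_le_sqrt {δ : ℝ} (hδ : 0 < δ) :
    ∃ N₀ : ℕ, ∀ N ≥ N₀, Real.log (N : ℝ) ≤ δ * √(N : ℝ) := by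
  have h := (isLittleO_log_rpow_atTop (show (0 : ℝ) < 1 / 2 by norm_num)).bound hδ
  obtain ⟨N₀, h0⟩ := eventually_atTop.1 (tendsto_natCast_atTop_atTop.eventually h)
  refine ⟨N₀, fun N hN => ?_⟩
  have := h0 N hN
  rw [← Real.sqrt_eq_rpow, Real.norm_of_nonneg (Real.sqrt_nonneg _)] at this
  exact (Real.le_norm_self _).trans this

/-- The unweighted form of `meanZero_hres_log_prime`, obtained by partial summation beyond `√Y`; the
bound is uniform over `z ≤ Y`. -/
lemma prime_sum_bound {k : ℕ} [NeZero k] {a : ZMod k} (ha : IsUnit a) {δ : ℝ} (hδ : 0 < δ) :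
    ∃ Y₀ : ℕ, ∀ Y ≥ Y₀, ∀ z ≤ Y,
      ‖∑ n ∈ Icc 1 z, (if n.Prime then hres a n else 0)‖ ≤ δ * Y / Real.log Y := by
  obtain ⟨N₁, h1⟩ := (meanZero_hres_log_prime ha).uniform (show 0 < δ / 8 by positivity)
  obtain ⟨N₂, h2⟩ := eventually_log_le_sqrt (show 0 < δ / 2 by positivity)
  have hle : ∀ n : ℕ, ‖(if n.Prime then hres a n else 0 : ℂ)‖ ≤ 1 := by
    intro n; split_ifs
    · exact norm_hres_le a n
    · simp
  refine ⟨max (max N₁ N₂) 2, fun Y hY z hz => ?_⟩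
  have hY2 : 2 ≤ Y := (le_max_right _ _).trans hY
  have hYr : (2 : ℝ) ≤ Y := by exact_mod_cast hY2
  have hlog : 0 < Real.log Y := Real.log_pos (by linarith)
  have hN1 : N₁ ≤ Y := (le_max_left _ _).trans ((le_max_left _ _).trans hY)
  have hlY := h2 Y ((le_max_right _ _).trans ((le_max_left _ _).trans hY))
  have hss : √(Y : ℝ) * √(Y : ℝ) = Y := Real.mul_self_sqrt (by positivity)
  have hsq : √(Y : ℝ) ≤ δ / 2 * Y / Real.log Y := by
    rw [le_div_iff₀ hlog]
    nlinarith [mul_le_mul_of_nonneg_left hlY (Real.sqrt_nonneg (Y : ℝ))]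
  set A := Nat.sqrt Y with hA
  have hAs : (A : ℝ) ≤ √(Y : ℝ) := Real.nat_sqrt_le_real_sqrt
  have hpos : 0 ≤ δ / 2 * Y / Real.log Y := by positivity
  have hsplit : δ * Y / Real.log Y = δ / 2 * Y / Real.log Y + δ / 2 * Y / Real.log Y := by ring
  rcases le_or_gt z A with hzA | hzA
  · have : (z : ℝ) ≤ A := by exact_mod_cast hzA
    have := norm_sum_Icc_le hle z
    linarith
  rw [← sum_Icc_one_add_Ioc _ hzA.le, hsplit]
  refine (norm_add_le _ _).trans (add_le_add ((norm_sum_Icc_le hle A).trans (hAs.trans hsq)) ?_)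
  have hA1 : 1 ≤ A := Nat.sqrt_pos.2 (by omega)
  have hlogA : Real.log Y / 2 ≤ Real.log (A + 1 : ℕ) := by
    have h3 : (Y : ℝ) ≤ (A + 1 : ℕ) ^ 2 := by exact_mod_cast (Nat.lt_succ_sqrt' Y).le
    have h4 := Real.log_le_log (by linarith) h3
    rw [Real.log_pow] at h4
    push_cast at h4 ⊢
    linarith
  have e : ∑ n ∈ Ioc A z, (if n.Prime then hres a n else 0)
      = ∑ n ∈ Ioc A z, ((1 / Real.log n : ℝ) : ℂ)
        * (if n.Prime then hres a n * (Real.log n : ℂ) else 0) := by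
    refine sum_congr rfl fun n hn => ?_
    rw [mem_Ioc] at hn
    have : Real.log n ≠ 0 := (Real.log_pos (by exact_mod_cast (show 1 < n by omega))).ne'
    split_ifs
    · have : (Real.log n : ℂ) ≠ 0 := by exact_mod_cast this
      push_cast at this ⊢
      field_simp
    · simp
  rw [e]
  have hlpos : ∀ n, A < n → 0 < Real.log n := fun n hn =>
    Real.log_pos (by exact_mod_cast (show 1 < n by omega))
  refine (abel_Ioc _ (fun n => 1 / Real.log n) (T := δ / 8 * Y) (W := 2 / Real.log Y)
    (fun M hM => h1 Y hN1 M (hM.trans hz)) ?_ ?_ (by positivity) ?_).trans ?_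
  · exact fun n hn _ => (div_pos one_pos (hlpos n hn)).le
  · intro m n h3 h4 _
    refine one_div_le_one_div_of_le (hlpos m h3) (Real.log_le_log ?_ (by exact_mod_cast h4))
    exact_mod_cast (show 0 < m by omega)
  · intro n h3 _
    rw [div_le_div_iff₀ (hlpos n h3) hlog]
    have : Real.log (A + 1 : ℕ) ≤ Real.log n :=
      Real.log_le_log (by positivity) (by exact_mod_cast h3)
    linarith
  · apply le_of_eq; ring

/-- A weak upper bound of Mertens type, read off from `log Z! = ∑ Λ(n) ⌊Z / n⌋`. -/
lemma sum_log_div_prime_le (Z : ℕ) (hZ : 1 ≤ Z) :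
    ∑ p ∈ (Icc 1 Z).filter Nat.Prime, Real.log p / (p - 1) ≤ 4 * Real.log Z := by
  have hZ0 : (0 : ℝ) < Z := by exact_mod_cast hZ
  have h1 : ∑ n ∈ Ioc 0 Z, Real.log n = ∑ n ∈ Ioc 0 Z, ArithmeticFunction.vonMangoldt n * (Z / n : ℕ) := by
    rw [← ArithmeticFunction.sum_Ioc_mul_zeta_eq_sum]
    rw [ArithmeticFunction.vonMangoldt_mul_zeta]
    rfl
  have h2 : ∑ n ∈ Ioc 0 Z, Real.log n ≤ Z * Real.log Z := by
    calc _ ≤ ∑ n ∈ Ioc 0 Z, Real.log Z := by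
          refine sum_le_sum fun n hn => ?_
          rw [mem_Ioc] at hn
          exact Real.log_le_log (by exact_mod_cast hn.1) (by exact_mod_cast hn.2)
      _ = _ := by simp
  have h3 : ∑ p ∈ (Icc 1 Z).filter Nat.Prime, Real.log p * (Z / p : ℕ)
      ≤ ∑ n ∈ Ioc 0 Z, ArithmeticFunction.vonMangoldt n * (Z / n : ℕ) := by
    calc _ = ∑ p ∈ (Icc 1 Z).filter Nat.Prime, ArithmeticFunction.vonMangoldt p * (Z / p : ℕ) := by
          refine sum_congr rfl fun p hp => ?_
          rw [ArithmeticFunction.vonMangoldt_apply_prime (mem_filter.1 hp).2]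
      _ ≤ _ := by
          refine sum_le_sum_of_subset_of_nonneg (fun p hp => ?_) fun _ _ _ =>
            mul_nonneg ArithmeticFunction.vonMangoldt_nonneg (Nat.cast_nonneg _)
          rw [mem_filter, mem_Icc] at hp
          rw [mem_Ioc]; omega
  have h4 : ∑ p ∈ (Icc 1 Z).filter Nat.Prime, Real.log p / (p - 1)
      ≤ ∑ p ∈ (Icc 1 Z).filter Nat.Prime, 4 / Z * (Real.log p * (Z / p : ℕ)) := by
    refine sum_le_sum fun p hp => ?_
    rw [mem_filter, mem_Icc] at hp
    have hp2 : (2 : ℝ) ≤ p := by exact_mod_cast hp.2.two_le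
    have hl : 0 ≤ Real.log p := Real.log_nonneg (by linarith)
    -- for `p ≤ Z` the floor of `Z / p` is at least half of `Z / p`
    have h5 : (Z : ℝ) ≤ 2 * (p * (Z / p : ℕ)) := by
      have h6 := Nat.div_add_mod Z p
      have h7 := Nat.mod_lt Z hp.2.pos
      have h8 : 1 ≤ Z / p := Nat.div_pos hp.1.2 hp.2.pos
      have : Z ≤ 2 * (p * (Z / p)) := by nlinarith
      exact_mod_cast this
    have h6 : 1 / ((p : ℝ) - 1) ≤ 4 / Z * (Z / p : ℕ) := by
      rw [div_mul_eq_mul_div, div_le_div_iff₀ (by linarith) hZ0]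
      nlinarith [(Nat.cast_nonneg (Z / p) : (0 : ℝ) ≤ (Z / p : ℕ))]
    calc _ = Real.log p * (1 / ((p : ℝ) - 1)) := by ring
      _ ≤ Real.log p * (4 / Z * (Z / p : ℕ)) := by gcongr
      _ = _ := by ring
  rw [← mul_sum] at h4
  refine h4.trans ?_
  calc _ ≤ 4 / Z * (Z * Real.log Z) := by gcongr; linarith
    _ = _ := by field_simp

/-- A consequence of Legendre's formula for the exponent of `p` in `N!`. -/
lemma sum_factorization_le {p : ℕ} (hp : p.Prime) (N : ℕ) :
    ∑ n ∈ Icc 1 N, (n.factorization p : ℝ) ≤ N / (p - 1) := by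
  have hp1 : (0 : ℝ) < p - 1 := by
    have : (1 : ℝ) < p := by exact_mod_cast hp.one_lt
    linarith
  have e : ∑ n ∈ Icc 1 N, n.factorization p = padicValNat p N.factorial := by
    rw [← Nat.factorization_def _ hp, ← prod_Ico_id_eq_factorial, Nat.factorization_prod]
    · simp [Finsupp.finsetSum_apply, show Icc 1 N = Ico 1 (N + 1) by ext; simp]
    · intro n hn; rw [mem_Ico] at hn; omega
  have : Fact p.Prime := ⟨hp⟩
  have h := sub_one_mul_padicValNat_factorial (p := p) N
  rw [le_div_iff₀ hp1]
  have h2 : (p - 1) * padicValNat p N.factorial ≤ N := by omega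
  have h3 : ((p - 1 : ℕ) : ℝ) * padicValNat p N.factorial ≤ N := by exact_mod_cast h2
  rw [Nat.cast_sub hp.one_le, Nat.cast_one] at h3
  rw [← e] at h3
  push_cast at h3
  linarith

/-- The largest prime factor of `n`; it is `0` for `n ≤ 1`. -/
def maxFac (n : ℕ) : ℕ := n.primeFactors.sup id

lemma le_maxFac {n p : ℕ} (hp : p.Prime) (hd : p ∣ n) (hn : n ≠ 0) : p ≤ maxFac n :=
  le_sup (f := id) (Nat.mem_primeFactors.2 ⟨hp, hd, hn⟩)

lemma maxFac_mem {n : ℕ} (hn : 2 ≤ n) : maxFac n ∈ n.primeFactors := by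
  have : n.primeFactors.Nonempty := Nat.nonempty_primeFactors.2 hn
  obtain ⟨p, hp, h⟩ := exists_mem_eq_sup _ this id
  rw [maxFac, h]; exact hp

lemma maxFac_prime {n : ℕ} (hn : 2 ≤ n) : (maxFac n).Prime := Nat.prime_of_mem_primeFactors (maxFac_mem hn)

lemma maxFac_dvd {n : ℕ} (hn : 2 ≤ n) : maxFac n ∣ n := Nat.dvd_of_mem_primeFactors (maxFac_mem hn)

lemma maxFac_le_of_dvd {m n : ℕ} (hn : n ≠ 0) (h : m ∣ n) : maxFac m ≤ maxFac n :=
  sup_mono (Nat.primeFactors_mono h hn)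

lemma maxFac_mul_prime {m p : ℕ} (hm : m ≠ 0) (hp : p.Prime) (h : maxFac m ≤ p) :
    maxFac (m * p) = p := by
  apply le_antisymm
  · rw [maxFac, Nat.primeFactors_mul hm hp.ne_zero, sup_union, hp.primeFactors]
    exact sup_le h (by simp)
  · exact le_maxFac hp (dvd_mul_left _ _) (mul_ne_zero hm hp.ne_zero)

/-- The proportion of `Y`-smooth integers up to `N` is `O(log Y / log N)`. The sum of `log n` over
smooth `n ≤ N` only involves primes up to `Y`, hence is `O(N log Y)`, while `log n ≥ (log N) / 2` for
all `n` beyond `√N`. -/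
lemma smooth_count (N Y : ℕ) (hN : 1 ≤ N) (hY : 1 ≤ Y) :
    (#((Icc 1 N).filter (fun n => maxFac n ≤ Y)) : ℝ) * Real.log N
      ≤ √(N : ℝ) * Real.log N + 8 * N * Real.log Y := by
  classical
  set E := (Icc 1 N).filter (fun n => maxFac n ≤ Y) with hE
  have hlN : 0 ≤ Real.log N := Real.log_nonneg (by exact_mod_cast hN)
  have h1 : ∑ n ∈ E, Real.log n ≤ 4 * N * Real.log Y := by
    calc _ ≤ ∑ n ∈ E, ∑ p ∈ (Icc 1 Y).filter Nat.Prime, n.factorization p * Real.log p := by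
          refine sum_le_sum fun n hn => ?_
          rw [Real.log_nat_eq_sum_factorization, Finsupp.sum]
          refine sum_le_sum_of_subset_of_nonneg (fun p hp => ?_) fun p hp _ => ?_
          · rw [Nat.support_factorization, Nat.mem_primeFactors] at hp
            rw [hE, mem_filter] at hn
            rw [mem_filter, mem_Icc]
            exact ⟨⟨hp.1.one_le, (le_maxFac hp.1 hp.2.1 hp.2.2).trans hn.2⟩, hp.1⟩
          · rw [mem_filter] at hp
            exact mul_nonneg (Nat.cast_nonneg _) (Real.log_nonneg (by exact_mod_cast hp.2.one_le))
      _ ≤ ∑ n ∈ Icc 1 N, ∑ p ∈ (Icc 1 Y).filter Nat.Prime, n.factorization p * Real.log p := by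
          refine sum_le_sum_of_subset_of_nonneg (filter_subset _ _) fun n _ _ =>
            sum_nonneg fun p hp => ?_
          rw [mem_filter] at hp
          exact mul_nonneg (Nat.cast_nonneg _) (Real.log_nonneg (by exact_mod_cast hp.2.one_le))
      _ = ∑ p ∈ (Icc 1 Y).filter Nat.Prime, (∑ n ∈ Icc 1 N, (n.factorization p : ℝ)) * Real.log p := by
          rw [sum_comm]; simp_rw [sum_mul]
      _ ≤ ∑ p ∈ (Icc 1 Y).filter Nat.Prime, N / (p - 1) * Real.log p := by
          refine sum_le_sum fun p hp => ?_
          rw [mem_filter] at hp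
          have := Real.log_nonneg (show (1 : ℝ) ≤ p by exact_mod_cast hp.2.one_le)
          gcongr
          exact sum_factorization_le hp.2 N
      _ = N * ∑ p ∈ (Icc 1 Y).filter Nat.Prime, Real.log p / (p - 1) := by
          rw [mul_sum]; exact sum_congr rfl fun p _ => by ring
      _ ≤ N * (4 * Real.log Y) := by gcongr; exact sum_log_div_prime_le Y hY
      _ = _ := by ring
  have h2 : ∀ n ∈ E, Real.log N ≤ (if n ≤ Nat.sqrt N then Real.log N else 0) + 2 * Real.log n := by
    intro n hn
    rw [hE, mem_filter, mem_Icc] at hn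
    have hn1 : (1 : ℝ) ≤ n := by exact_mod_cast hn.1.1
    have := Real.log_nonneg hn1
    split_ifs with hc
    · linarith
    · have h3 : (N : ℝ) ≤ n ^ 2 := by
        have := Nat.lt_succ_sqrt' N
        have : N ≤ n ^ 2 := this.le.trans (Nat.pow_le_pow_left (by simp; omega) 2)
        exact_mod_cast this
      have h4 := Real.log_le_log (by exact_mod_cast hN) h3
      rw [Real.log_pow] at h4
      push_cast at h4
      linarith
  have h3 : ∑ n ∈ E, (if n ≤ Nat.sqrt N then Real.log N else 0) ≤ √(N : ℝ) * Real.log N := by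
    rw [← sum_filter, sum_const, nsmul_eq_mul]
    gcongr
    refine le_trans ?_ (Real.nat_sqrt_le_real_sqrt (a := N))
    have : #(E.filter (fun n => n ≤ Nat.sqrt N)) ≤ #(Icc 1 (Nat.sqrt N)) := by
      refine card_le_card fun n hn => ?_
      rw [mem_filter, hE, mem_filter, mem_Icc] at hn
      rw [mem_Icc]; omega
    rw [Nat.card_Icc] at this
    exact_mod_cast this
  calc _ = ∑ n ∈ E, Real.log N := by simp
    _ ≤ ∑ n ∈ E, ((if n ≤ Nat.sqrt N then Real.log N else 0) + 2 * Real.log n) := sum_le_sum h2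
    _ = ∑ n ∈ E, (if n ≤ Nat.sqrt N then Real.log N else 0) + 2 * ∑ n ∈ E, Real.log n := by
        rw [sum_add_distrib, mul_sum]
    _ ≤ _ := by linarith

/-! ### Equidistribution of largest prime factors -/

/-- Parametrization of the integers with largest prime factor exceeding `Y` as `m * p` with
`maxFac m ≤ p`. The truncated difference `maxFac m - 1` makes the endpoint `p = maxFac m` admissible
in the half-open interval, also for `m = 1`, where `maxFac m = 0`. -/
lemma sum_maxFac_eq (f : ℕ → ℂ) (N Y : ℕ) :
    ∑ n ∈ (Icc 2 N).filter (fun n => Y < maxFac n), f (maxFac n)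
      = ∑ m ∈ Icc 1 N, ∑ p ∈ Ioc (max (maxFac m - 1) Y) (N / m), if p.Prime then f p else 0 := by
  simp_rw [← sum_filter]
  rw [sum_sigma']
  refine sum_bij' (fun n _ => ⟨n / maxFac n, maxFac n⟩) (fun x _ => x.1 * x.2) ?_ ?_ ?_ ?_ ?_
  · intro n hn
    rw [mem_filter, mem_Icc] at hn
    have hp := maxFac_prime hn.1.1
    have hd := maxFac_dvd hn.1.1
    have h1 : 0 < n / maxFac n := Nat.div_pos (Nat.le_of_dvd (by omega) hd) hp.pos
    have h2 : n / maxFac n ≤ n := Nat.div_le_self _ _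
    have h3 : maxFac (n / maxFac n) ≤ maxFac n :=
      maxFac_le_of_dvd (by omega) (Nat.div_dvd_of_dvd hd)
    have h4 : maxFac n ≤ N / (n / maxFac n) := by
      rw [Nat.le_div_iff_mul_le h1, Nat.mul_div_cancel' hd]; exact hn.1.2
    have := hp.pos
    simp only [mem_sigma, mem_Icc, mem_filter, mem_Ioc]
    exact ⟨⟨h1, by omega⟩, ⟨by omega, h4⟩, hp⟩
  · rintro ⟨m, p⟩ hx
    simp only [mem_sigma, mem_Icc, mem_filter, mem_Ioc] at hx ⊢
    obtain ⟨⟨h1, h2⟩, ⟨h3, h4⟩, hp⟩ := hx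
    rw [maxFac_mul_prime (by omega) hp (by omega)]
    rw [Nat.le_div_iff_mul_le (by omega), mul_comm] at h4
    exact ⟨⟨by nlinarith [hp.two_le], h4⟩, by omega⟩
  · intro n hn
    rw [mem_filter, mem_Icc] at hn
    exact Nat.div_mul_cancel (maxFac_dvd hn.1.1)
  · rintro ⟨m, p⟩ hx
    simp only [mem_sigma, mem_Icc, mem_filter, mem_Ioc] at hx ⊢
    obtain ⟨⟨h1, h2⟩, ⟨h3, h4⟩, hp⟩ := hx
    rw [maxFac_mul_prime (by omega) hp (by omega), Nat.mul_div_cancel _ hp.pos]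
  · intro n hn; rfl

lemma sum_inv_le (N : ℕ) : ∑ m ∈ Icc 1 N, (1 : ℝ) / m ≤ 1 + Real.log N := by
  have := harmonic_le_one_add_log N
  rw [harmonic_eq_sum_Icc] at this
  push_cast at this
  simpa using this

/-- Largest prime factors are equidistributed in the reduced residue classes. Integers that are
`N ^ α`-smooth are few by `smooth_count`; the others are `m * p` with `p` in an interval whose upper
end is at least `N ^ α`, where `prime_sum_bound` saves a factor that compensates
`∑ 1 / m ≤ 1 + log N`. -/
lemma sum_hres_maxFac {k : ℕ} [NeZero k] {a : ZMod k} (ha : IsUnit a) :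
    ∀ ε > 0, ∃ N₀ : ℕ, ∀ N ≥ N₀, ‖∑ n ∈ Icc 2 N, hres a (maxFac n)‖ ≤ ε * N := by
  intro ε hε
  -- `8 α = ε / 8` handles the smooth integers; `4 δ / α = ε / 2` handles the others
  set α : ℝ := ε / 64 with hα
  have hα0 : 0 < α := by positivity
  set δ : ℝ := ε * α / 8 with hδ
  have hδ0 : 0 < δ := by positivity
  obtain ⟨Y₀, hY₀⟩ := prime_sum_bound ha hδ0
  have ev1 : ∀ᶠ N : ℕ in atTop, (Y₀ : ℝ) ≤ (N : ℝ) ^ α :=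
    ((tendsto_rpow_atTop hα0).comp tendsto_natCast_atTop_atTop).eventually_ge_atTop _
  have ev2 : ∀ᶠ N : ℕ in atTop, max 1 (64 * Real.log 2 / ε) ≤ Real.log (N : ℝ) :=
    (Real.tendsto_log_atTop.comp tendsto_natCast_atTop_atTop).eventually_ge_atTop _
  have ev3 : ∀ᶠ N : ℕ in atTop, (4 / ε) ^ 2 ≤ (N : ℝ) :=
    tendsto_natCast_atTop_atTop.eventually_ge_atTop _
  obtain ⟨N₀, h0⟩ := eventually_atTop.1 (((ev1.and ev2).and ev3).and (eventually_ge_atTop 2))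
  refine ⟨N₀, fun N hN => ?_⟩
  obtain ⟨⟨⟨h1, h2⟩, h3⟩, hN2⟩ := h0 N hN
  have hNr : (2 : ℝ) ≤ N := by exact_mod_cast hN2
  have hl1 : 1 ≤ Real.log N := (le_max_left _ _).trans h2
  have hl2 : 64 * Real.log 2 / ε ≤ Real.log N := (le_max_right _ _).trans h2
  have hone : (1 : ℝ) ≤ (N : ℝ) ^ α := Real.one_le_rpow (by linarith) hα0.le
  set Y := ⌊(N : ℝ) ^ α⌋₊ + 1 with hY
  have hYlo : (N : ℝ) ^ α ≤ Y := by rw [hY]; push_cast; exact (Nat.lt_floor_add_one _).le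
  have hYhi : (Y : ℝ) ≤ 2 * (N : ℝ) ^ α := by
    rw [hY]; push_cast
    have := Nat.floor_le (show (0 : ℝ) ≤ (N : ℝ) ^ α by linarith)
    linarith
  have hY1 : 1 ≤ Y := by omega
  have hYY₀ : Y₀ ≤ Y := by exact_mod_cast h1.trans hYlo
  have hlogY : α * Real.log N ≤ Real.log Y := by
    rw [← Real.log_rpow (by linarith)]
    exact Real.log_le_log (by linarith) hYlo
  have hlogY0 : 0 < Real.log Y := lt_of_lt_of_le (by positivity) hlogY
  have hlogY' : Real.log Y ≤ Real.log 2 + α * Real.log N := by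
    rw [← Real.log_rpow (by linarith), ← Real.log_mul (by norm_num) (by linarith)]
    exact Real.log_le_log (by positivity) hYhi
  rw [← sum_filter_add_sum_filter_not _ (fun n => Y < maxFac n), sum_maxFac_eq (hres a)]
  have p1 : ‖∑ m ∈ Icc 1 N, ∑ p ∈ Ioc (max (maxFac m - 1) Y) (N / m),
      (if p.Prime then hres a p else 0)‖ ≤ ε / 2 * N := by
    calc _ ≤ ∑ m ∈ Icc 1 N, 2 * δ * N / Real.log Y * (1 / m) := by
          refine norm_sum_le_of_le _ fun m hm => ?_
          rw [mem_Icc] at hm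
          have hm0 : (0 : ℝ) < m := by exact_mod_cast hm.1
          set L := max (maxFac m - 1) Y
          rcases le_or_gt (N / m) L with hc | hc
          · rw [Ioc_eq_empty (by omega)]; simp; positivity
          · have hz : Y ≤ N / m := (le_max_right _ _).trans hc.le
            have e := sum_Icc_one_add_Ioc (fun p => if p.Prime then hres a p else 0) hc.le
            rw [← eq_sub_iff_add_eq'] at e
            rw [e]
            have b1 := hY₀ (N / m) (hYY₀.trans hz) (N / m) le_rfl
            have b2 := hY₀ (N / m) (hYY₀.trans hz) L hc.le
            have b3 : Real.log Y ≤ Real.log (N / m : ℕ) :=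
              Real.log_le_log (by exact_mod_cast hY1) (by exact_mod_cast hz)
            have b4 : ((N / m : ℕ) : ℝ) ≤ N / m := Nat.cast_div_le
            have b5 : δ * (N / m : ℕ) / Real.log (N / m : ℕ) ≤ δ * (N / m) / Real.log Y := by
              gcongr
            refine (norm_sub_le _ _).trans ?_
            calc _ ≤ δ * (N / m) / Real.log Y + δ * (N / m) / Real.log Y := by linarith
              _ = _ := by ring
      _ = 2 * δ * N / Real.log Y * ∑ m ∈ Icc 1 N, (1 : ℝ) / m := by rw [mul_sum]
      _ ≤ 2 * δ * N / (α * Real.log N) * (2 * Real.log N) := by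
          have := sum_inv_le N
          gcongr
          linarith
      _ = _ := by rw [hδ]; field_simp; ring
  have p2 : ‖∑ n ∈ (Icc 2 N).filter (fun n => ¬ Y < maxFac n), hres a (maxFac n)‖ ≤ ε / 2 * N := by
    have hsc := smooth_count N Y (by omega) hY1
    have hcard : #((Icc 2 N).filter (fun n => ¬ Y < maxFac n))
        ≤ #((Icc 1 N).filter (fun n => maxFac n ≤ Y)) := by
      refine card_le_card fun n hn => ?_
      simp only [mem_filter, mem_Icc] at hn ⊢
      omega
    have hcard' : (#((Icc 2 N).filter (fun n => ¬ Y < maxFac n)) : ℝ)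
        ≤ #((Icc 1 N).filter (fun n => maxFac n ≤ Y)) := by exact_mod_cast hcard
    have hsqrt : √(N : ℝ) ≤ ε / 4 * N := by
      have h4 : 4 / ε ≤ √(N : ℝ) := Real.le_sqrt_of_sq_le h3
      rw [div_le_iff₀ hε] at h4
      nlinarith [Real.mul_self_sqrt (show (0 : ℝ) ≤ N by positivity), Real.sqrt_nonneg (N : ℝ)]
    have h8 : 8 * Real.log Y ≤ ε / 4 * Real.log N := by
      rw [div_le_iff₀ hε] at hl2
      have : α * Real.log N = ε * Real.log N / 64 := by rw [hα]; ring
      linarith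
    have hfin : (#((Icc 1 N).filter (fun n => maxFac n ≤ Y)) : ℝ) ≤ ε / 2 * N := by
      have hlpos : 0 < Real.log N := by linarith
      refine le_of_mul_le_mul_right (hsc.trans ?_) hlpos
      have h9 := mul_le_mul_of_nonneg_right hsqrt hlpos.le
      have h10 := mul_le_mul_of_nonneg_left h8 (show (0 : ℝ) ≤ N by positivity)
      linarith
    calc _ ≤ ∑ n ∈ (Icc 2 N).filter (fun n => ¬ Y < maxFac n), (1 : ℝ) :=
          norm_sum_le_of_le _ fun n _ => norm_hres_le a _
      _ = #((Icc 2 N).filter (fun n => ¬ Y < maxFac n)) := by simp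
      _ ≤ _ := hcard'.trans hfin
  refine (norm_add_le _ _).trans ?_
  linarith

/-! ### Duality and mean values of the Möbius function with prescribed least prime factor -/

lemma moebius_mul_prime {d q : ℕ} (hq : q.Prime) (h : ¬ q ∣ d) :
    ArithmeticFunction.moebius (d * q) = -ArithmeticFunction.moebius d := by
  rw [ArithmeticFunction.isMultiplicative_moebius.map_mul_of_coprime
    ((Nat.Prime.coprime_iff_not_dvd hq).2 h).symm, ArithmeticFunction.moebius_apply_prime hq]
  ring

lemma moebius_mul_prime_of_dvd {d q : ℕ} (hq : q.Prime) (h : q ∣ d) :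
    ArithmeticFunction.moebius (d * q) = 0 := by
  apply ArithmeticFunction.moebius_eq_zero_of_not_squarefree
  intro hs
  have := hs q (mul_dvd_mul_right h q)
  exact hq.one_lt.ne' (Nat.isUnit_iff.1 this)

/-- The function `μ(n) f(p(n))`, where `p(n)` is the least prime factor, with value `0` at `1`. -/
noncomputable def moebiusMinFac (f : ℕ → ℂ) (n : ℕ) : ℂ :=
  if n = 1 then 0 else ArithmeticFunction.moebius n * f n.minFac

/-- Alladi's duality between least and largest prime factors. Squarefree divisors `d ≠ 1` of `n` pair
off under multiplication by the largest prime factor `q` of `n`, which leaves the least prime factor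
of `d` unchanged; only `d = q` lacks a partner, the partner `1` being excluded. -/
lemma sum_divisors_moebiusMinFac (f : ℕ → ℂ) {n : ℕ} (hn : 2 ≤ n) :
    ∑ d ∈ n.divisors, moebiusMinFac f d = -f (maxFac n) := by
  set q := maxFac n with hqdef
  have hq : q.Prime := maxFac_prime hn
  have hqn : q ∣ n := maxFac_dvd hn
  have hn0 : n ≠ 0 := by omega
  have hmin : ∀ d, d ∣ n → d ≠ 1 → (d * q).minFac = d.minFac := by
    intro d hd hd1
    have hdp := Nat.minFac_prime hd1
    apply le_antisymm
    · exact Nat.minFac_le_of_dvd hdp.two_le ((Nat.minFac_dvd d).mul_right q)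
    · have hp : (d * q).minFac.Prime := Nat.minFac_prime (by
        intro h; exact hd1 (Nat.eq_one_of_mul_eq_one_right h))
      rcases hp.dvd_mul.1 (Nat.minFac_dvd (d * q)) with h | h
      · exact Nat.minFac_le_of_dvd hp.two_le h
      · rw [(Nat.prime_dvd_prime_iff_eq hp hq).1 h]
        exact le_maxFac hdp ((Nat.minFac_dvd d).trans hd) hn0
  set s := n.divisors.filter (fun d => Squarefree d ∧ d ≠ 1 ∧ d ≠ q) with hs
  have hsub : insert q s ⊆ n.divisors := by
    intro d hd
    rw [mem_insert] at hd
    rcases hd with rfl | hd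
    · exact Nat.mem_divisors.2 ⟨hqn, hn0⟩
    · exact (mem_filter.1 hd).1
  rw [← sum_subset hsub, sum_insert (by simp [hs])]
  · have h1 : moebiusMinFac f q = -f q := by
      rw [moebiusMinFac, if_neg hq.one_lt.ne', ArithmeticFunction.moebius_apply_prime hq,
        hq.minFac_eq]
      simp
    have h2 : ∑ d ∈ s, moebiusMinFac f d = 0 := by
      -- the involution removes or adds the prime `q`, which never changes the least prime factor
      refine sum_involution (fun d _ => if q ∣ d then d / q else d * q) ?_ ?_ ?_ ?_
      · intro d hd
        rw [hs, mem_filter, Nat.mem_divisors] at hd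
        obtain ⟨⟨hdn, _⟩, hsq, hd1, hdq⟩ := hd
        split_ifs with hc
        · obtain ⟨e, rfl⟩ := hc
          rw [mul_comm] at *
          rw [Nat.mul_div_cancel _ hq.pos]
          have he1 : e ≠ 1 := by rintro rfl; simp at hdq
          have hqe : ¬ q ∣ e := fun h => hq.one_lt.ne'
            (Nat.isUnit_iff.1 (hsq q (mul_dvd_mul_right h q)))
          rw [moebiusMinFac, moebiusMinFac, if_neg hd1, if_neg he1,
            hmin e ((dvd_mul_right e q).trans hdn) he1, moebius_mul_prime hq hqe]
          push_cast; ring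
        · have h3 : d * q ≠ 1 := fun h => hd1 (Nat.eq_one_of_mul_eq_one_right h)
          rw [moebiusMinFac, moebiusMinFac, if_neg hd1, if_neg h3,
            hmin d hdn hd1, moebius_mul_prime hq hc]
          push_cast; ring
      · intro d hd _
        rw [hs, mem_filter, Nat.mem_divisors] at hd
        have hd0 : 0 < d := Nat.pos_of_ne_zero fun h => hd.1.2 (by rw [h] at hd; simpa using hd.1.1)
        split_ifs with hc
        · exact (Nat.div_lt_self hd0 hq.one_lt).ne
        · exact (lt_mul_of_one_lt_right hd0 hq.one_lt).ne'
      · intro d hd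
        rw [hs, mem_filter, Nat.mem_divisors] at hd
        obtain ⟨⟨hdn, _⟩, hsq, hd1, hdq⟩ := hd
        split_ifs with hc
        · obtain ⟨e, rfl⟩ := hc
          rw [mul_comm] at *
          rw [Nat.mul_div_cancel _ hq.pos]
          have he1 : e ≠ 1 := by rintro rfl; simp at hdq
          have hqe : ¬ q ∣ e := fun h => hq.one_lt.ne'
            (Nat.isUnit_iff.1 (hsq q (mul_dvd_mul_right h q)))
          rw [hs, mem_filter, Nat.mem_divisors]
          exact ⟨⟨(dvd_mul_right e q).trans hdn, hn0⟩,
            hsq.squarefree_of_dvd (dvd_mul_right e q), he1, fun h => hqe h.symm.dvd⟩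
        · have hcop : d.Coprime q := ((Nat.Prime.coprime_iff_not_dvd hq).2 hc).symm
          rw [hs, mem_filter, Nat.mem_divisors]
          refine ⟨⟨hcop.mul_dvd_of_dvd_of_dvd hdn hqn, hn0⟩,
            (Nat.squarefree_mul hcop).2 ⟨hsq, hq.prime.squarefree⟩,
            fun h => hd1 (Nat.eq_one_of_mul_eq_one_right h), fun h => hd1 ?_⟩
          exact Nat.eq_of_mul_eq_mul_right hq.pos (by rw [h, one_mul])
      · intro d hd
        rw [hs, mem_filter, Nat.mem_divisors] at hd
        obtain ⟨⟨hdn, _⟩, hsq, hd1, hdq⟩ := hd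
        by_cases hc : q ∣ d
        · obtain ⟨e, rfl⟩ := hc
          have hqe : ¬ q ∣ e := fun h => hq.one_lt.ne'
            (Nat.isUnit_iff.1 (hsq q (mul_dvd_mul_left q h)))
          rw [if_pos (dvd_mul_right q e), Nat.mul_div_cancel_left _ hq.pos, if_neg hqe, mul_comm]
        · simp [hc, Nat.mul_div_cancel _ hq.pos]
    rw [h1, h2, add_zero]
  · intro d hd hd'
    rw [mem_insert, hs, mem_filter] at hd'
    rw [moebiusMinFac]
    split_ifs with h1
    · rfl
    · by_cases hsq : Squarefree d
      · exact absurd (by tauto) hd'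
      · rw [ArithmeticFunction.moebius_eq_zero_of_not_squarefree hsq]; simp

lemma norm_moebiusMinFac_le {f : ℕ → ℂ} (hf : ∀ n, ‖f n‖ ≤ 1) (n : ℕ) :
    ‖moebiusMinFac f n‖ ≤ 1 := by
  rw [moebiusMinFac]
  split_ifs
  · simp
  · have h1 : ‖(ArithmeticFunction.moebius n : ℂ)‖ ≤ 1 := by
      have := @ArithmeticFunction.abs_moebius_le_one n
      rw [Complex.norm_intCast]
      exact_mod_cast this
    rw [norm_mul]
    exact mul_le_one₀ h1 (norm_nonneg _) (hf _)

/-- The `n` with least prime factor `q` and `μ n ≠ 0` are `m * q` with `m` coprime to all primes up to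
`q`, so the sum is minus a sum of `μ` against the trivial character modulo the primorial of `q`. -/
lemma meanZero_moebius_minFac_eq {q : ℕ} (hq : q.Prime) :
    MeanZero (fun n => if n.minFac = q then (ArithmeticFunction.moebius n : ℂ) else 0) := by
  intro ε hε
  have : NeZero (primorial q) := ⟨primorial_ne_zero q⟩
  obtain ⟨N₀, h0⟩ := (meanZero_moebius_mul_char (1 : DirichletCharacter ℂ (primorial q))).uniform hε
  refine ⟨N₀, fun N hN => ?_⟩
  have e : ∑ n ∈ Icc 1 N, (if n.minFac = q then (ArithmeticFunction.moebius n : ℂ) else 0)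
      = -∑ m ∈ Icc 1 (N / q), (1 : DirichletCharacter ℂ (primorial q)) m
          * (ArithmeticFunction.moebius m : ℂ) := by
    have e1 : ∑ n ∈ Icc 1 N, (if n.minFac = q then (ArithmeticFunction.moebius n : ℂ) else 0)
        = ∑ n ∈ (Icc 1 (N / q)).image (· * q),
          (if n.minFac = q then (ArithmeticFunction.moebius n : ℂ) else 0) := by
      refine (sum_subset (fun n hn => ?_) fun n hn hn' => ?_).symm
      · rw [mem_image] at hn
        obtain ⟨m, hm, rfl⟩ := hn
        rw [mem_Icc] at hm ⊢
        exact ⟨Nat.mul_pos hm.1 hq.pos, (Nat.le_div_iff_mul_le hq.pos).1 hm.2⟩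
      · refine if_neg fun h => hn' ?_
        obtain ⟨m, hm⟩ : q ∣ n := h ▸ Nat.minFac_dvd n
        rw [mem_Icc] at hn
        rw [mem_image]
        refine ⟨m, ?_, by rw [hm, mul_comm]⟩
        rw [mem_Icc, Nat.le_div_iff_mul_le hq.pos, mul_comm m, ← hm]
        refine ⟨Nat.pos_of_ne_zero ?_, hn.2⟩
        rintro rfl; omega
    rw [e1, sum_image fun x _ y _ h => Nat.eq_of_mul_eq_mul_right hq.pos h, ← sum_neg_distrib]
    refine sum_congr rfl fun m hm => ?_
    by_cases hc : m.Coprime (primorial q)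
    · have hu : IsUnit (m : ZMod (primorial q)) := (ZMod.isUnit_iff_coprime _ _).2 hc
      have hqm : ¬ q ∣ m := fun h => hq.one_lt.ne' (Nat.eq_one_of_dvd_coprimes hc h hq.dvd_primorial)
      have hmf : (m * q).minFac = q := by
        have hp : (m * q).minFac.Prime := Nat.minFac_prime (by
          intro h; exact hq.one_lt.ne' (Nat.eq_one_of_mul_eq_one_left h))
        apply le_antisymm
        · exact Nat.minFac_le_of_dvd hq.two_le (dvd_mul_left _ _)
        · rcases hp.dvd_mul.1 (Nat.minFac_dvd (m * q)) with h | h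
          · by_contra hlt
            exact hp.one_lt.ne' (Nat.eq_one_of_dvd_coprimes hc h
              (hp.dvd_primorial_iff.2 (not_le.1 hlt).le))
          · exact ((Nat.prime_dvd_prime_iff_eq hp hq).1 h).ge
      rw [if_pos hmf, moebius_mul_prime hq hqm, MulChar.one_apply hu]
      push_cast; ring
    · have hu : ¬ IsUnit (m : ZMod (primorial q)) := fun h => hc ((ZMod.isUnit_iff_coprime _ _).1 h)
      rw [MulChar.map_nonunit _ hu, zero_mul, neg_zero]
      obtain ⟨r, hr, hrm, hrq⟩ := Nat.Prime.not_coprime_iff_dvd.1 hc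
      have hrle := hr.dvd_primorial_iff.1 hrq
      rcases hrle.lt_or_eq with hlt | rfl
      · refine if_neg fun h => ?_
        have := Nat.minFac_le_of_dvd hr.two_le (hrm.mul_right q)
        omega
      · rw [moebius_mul_prime_of_dvd hr hrm]; simp
  rw [e, norm_neg]
  exact h0 N hN _ (Nat.div_le_self _ _)

/-- `∏_{p ≤ z} (1 - 1/p)` tends to zero because the sum of reciprocals of primes diverges. -/
lemma exists_totient_primorial_le {ε : ℝ} (hε : 0 < ε) :
    ∃ z : ℕ, 1 ≤ z ∧ ((primorial z).totient : ℝ) ≤ ε * primorial z := by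
  have hs := (not_summable_iff_tendsto_nat_atTop_of_nonneg (fun n =>
    Set.indicator_nonneg (fun _ _ => by positivity) n)).1 not_summable_one_div_on_primes
  obtain ⟨z, hz, hz1⟩ := ((hs.eventually_ge_atTop (-Real.log ε)).and (eventually_ge_atTop 1)).exists
  refine ⟨z, hz1, ?_⟩
  have h1 : ((primorial z).totient : ℝ)
      = primorial z * ∏ p ∈ (primorial z).primeFactors, (1 - (p : ℝ)⁻¹) := by
    have := congrArg (fun x : ℚ => (x : ℝ)) (Nat.totient_eq_mul_prod_factors (primorial z))
    push_cast at this
    exact this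
  rw [h1, mul_comm]
  gcongr
  calc _ ≤ ∏ p ∈ (primorial z).primeFactors, Real.exp (-(p : ℝ)⁻¹) := by
        refine prod_le_prod (fun p hp => ?_) fun p _ => ?_
        · have : (1 : ℝ) ≤ p := by exact_mod_cast (Nat.prime_of_mem_primeFactors hp).one_le
          exact sub_nonneg.2 (inv_le_one_of_one_le₀ this)
        · have := Real.add_one_le_exp (-(p : ℝ)⁻¹)
          linarith
    _ = Real.exp (-∑ p ∈ (primorial z).primeFactors, (p : ℝ)⁻¹) := by
        rw [← Real.exp_sum, sum_neg_distrib]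
    _ ≤ Real.exp (Real.log ε) := by
        rw [Real.exp_le_exp, neg_le]
        refine hz.trans ?_
        rw [sum_indicator_eq_sum_filter]
        refine (sum_le_sum_of_subset_of_nonneg (fun p hp => ?_) fun p _ _ => ?_).trans_eq
          (sum_congr rfl fun p _ => one_div _)
        · simp only [mem_filter, mem_range, Set.mem_ofPred_eq] at hp
          rw [primeFactors_primorial, Nat.mem_primesLE]
          exact ⟨hp.1.le, hp.2⟩
        · positivity
    _ = ε := Real.exp_log hε

/-- For each of the finitely many least prime factors up to `z` the sum is `o(N)`, and the integers
with no prime factor up to `z` have density `∏_{p ≤ z} (1 - 1/p)`, small for large `z`. -/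
lemma meanZero_moebiusMinFac {f : ℕ → ℂ} (hf : ∀ n, ‖f n‖ ≤ 1) : MeanZero (moebiusMinFac f) := by
  intro ε hε
  obtain ⟨z, hz1, hz⟩ := exists_totient_primorial_le (show 0 < ε / 4 by positivity)
  have h1 : MeanZero (fun n => ∑ q ∈ Nat.primesLE z, f q *
      (if n.minFac = q then (ArithmeticFunction.moebius n : ℂ) else 0)) :=
    MeanZero.finset_sum _ fun q hq =>
      (meanZero_moebius_minFac_eq (Nat.prime_of_mem_primesLE hq)).const_mul _
  obtain ⟨N₀, h0⟩ := h1 (ε / 2) (by positivity)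
  set Q := primorial z with hQ
  have hQ0 : (0 : ℝ) < Q := by exact_mod_cast primorial_pos z
  obtain ⟨N₁, hN₁⟩ := exists_nat_ge (Q.totient / (ε / 4) : ℝ)
  refine ⟨max N₀ N₁, fun N hN => ?_⟩
  have hNN : (N₁ : ℝ) ≤ N := by exact_mod_cast (le_max_right _ _).trans hN
  have hsplit : ∀ n ∈ Icc 1 N, moebiusMinFac f n = (∑ q ∈ Nat.primesLE z, f q *
      (if n.minFac = q then (ArithmeticFunction.moebius n : ℂ) else 0))
      + (if z < n.minFac then moebiusMinFac f n else 0) := by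
    intro n _
    by_cases hn : n = 1
    · subst hn
      have : ∀ q ∈ Nat.primesLE z, ¬ (1 = q) := fun q hq h =>
        (Nat.prime_of_mem_primesLE hq).one_lt.ne h
      rw [sum_eq_zero fun q hq => by rw [Nat.minFac_one, if_neg (this q hq), mul_zero]]
      simp [moebiusMinFac]
    · have hp := Nat.minFac_prime hn
      simp only [mul_ite, mul_zero, sum_ite_eq, Nat.mem_primesLE, hp, and_true]
      rw [moebiusMinFac, if_neg hn]
      split_ifs
      · omega
      · ring
      · ring
      · omega
  rw [sum_congr rfl hsplit, sum_add_distrib]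
  have p1 := h0 N ((le_max_left _ _).trans hN)
  have p2 : ‖∑ n ∈ Icc 1 N, (if z < n.minFac then moebiusMinFac f n else 0)‖ ≤ ε / 2 * N := by
    have hcard : #((Icc 1 N).filter (fun n => z < n.minFac)) ≤ Q.totient * (N / Q + 1) := by
      refine (card_le_card ?_).trans (Nat.Ico_filter_coprime_le 1 N (primorial_ne_zero z))
      intro n hn
      simp only [mem_filter, mem_Icc, mem_Ico] at hn ⊢
      refine ⟨by omega, ?_⟩
      by_contra hc
      obtain ⟨r, hr, hrQ, hrn⟩ := Nat.Prime.not_coprime_iff_dvd.1 hc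
      have h2 := hr.dvd_primorial_iff.1 hrQ
      have h3 := Nat.minFac_le_of_dvd hr.two_le hrn
      omega
    calc _ ≤ ∑ n ∈ Icc 1 N, (if z < n.minFac then (1 : ℝ) else 0) := by
          refine norm_sum_le_of_le _ fun n _ => ?_
          split_ifs
          · exact norm_moebiusMinFac_le hf n
          · simp
      _ = #((Icc 1 N).filter (fun n => z < n.minFac)) := by rw [← sum_filter]; simp
      _ ≤ Q.totient * ((N / Q : ℕ) + 1) := by exact_mod_cast hcard
      _ ≤ Q.totient * (N / Q + 1) := by gcongr; exact Nat.cast_div_le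
      _ = Q.totient * (N / Q) + Q.totient := by ring
      _ ≤ ε / 4 * Q * (N / Q) + ε / 4 * N := by
          refine add_le_add (by gcongr) ?_
          rw [div_le_iff₀ (by positivity)] at hN₁
          nlinarith
      _ = ε / 2 * N := by field_simp; ring
  refine (norm_add_le _ _).trans ?_
  linarith

/-! ### Alladi's formula -/

/-- If `a` is bounded with mean value zero and the summatory function of `1 * a` is `o(N)`, then
`∑ a n / n` converges to zero: Axer's theorem controls the error made on replacing `N / n` by its
integer part. -/
lemma tendsto_sum_div_of_meanZero {a : ℕ → ℂ} (ha : ∀ n, ‖a n‖ ≤ 1) (hm : MeanZero a)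
    (hs : ∀ ε > 0, ∃ N₀ : ℕ, ∀ N ≥ N₀, ‖∑ m ∈ Icc 1 N, ∑ d ∈ m.divisors, a d‖ ≤ ε * N) :
    Tendsto (fun N : ℕ => ∑ n ∈ Icc 1 N, a n / n) atTop (nhds 0) := by
  have hax := axer a ha hm (fun y => ((y - ⌊y⌋₊ : ℝ) : ℂ)) 1 (fun y hy => by
      have h1 := Nat.floor_le (zero_le_one.trans hy)
      have h2 := Nat.lt_floor_add_one y
      have h3 : 1 ≤ √y := Real.one_le_sqrt.2 hy
      rw [Complex.norm_real, Real.norm_eq_abs, abs_of_nonneg (by linarith)]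
      linarith) (fun K => ⟨{0, 1}, fun j => if j = 0 then 1 else -1,
        fun j y => if j = 0 then y else ⌊y⌋₊, fun j => by
          by_cases hj : j = 0
          · simp only [hj, if_true]
            exact monotone_id
          · simp only [hj, if_false]
            exact (Nat.mono_cast (α := ℝ)).comp (Nat.floor_mono (R := ℝ)),
        fun j y hy => by
          dsimp only
          split_ifs
          · linarith
          · positivity,
        fun y _ _ => by
          rw [sum_pair zero_ne_one]
          simp
          ring⟩)
  rw [Metric.tendsto_atTop]
  intro ε hε
  obtain ⟨N₀, h0⟩ := hax (ε / 4) (by positivity)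
  obtain ⟨N₁, h1⟩ := hs (ε / 4) (by positivity)
  refine ⟨max 1 (max N₀ N₁), fun N hN => ?_⟩
  have hN1 : 1 ≤ N := (le_max_left _ _).trans hN
  have q0 := h0 N (((le_max_left _ _).trans (le_max_right _ _)).trans hN)
  have q1 := h1 N (((le_max_right _ _).trans (le_max_right _ _)).trans hN)
  have hNpos : (0 : ℝ) < N := by exact_mod_cast hN1
  have e1 : ∑ m ∈ Icc 1 N, ∑ d ∈ m.divisors, a d
      = ∑ n ∈ Icc 1 N, a n * ((N / n : ℕ) : ℂ) := by
    have := sum_conv a (fun _ => 1) N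
    simp only [mul_one, sum_const, Nat.card_Icc, add_tsub_cancel_right, nsmul_eq_mul] at this
    rw [← this]
    exact sum_congr rfl fun m _ => (Nat.sum_divisorsAntidiagonal (fun i _ => a i)).symm
  have e2 : (N : ℂ) * ∑ n ∈ Icc 1 N, a n / n
      = ∑ n ∈ Icc 1 N, a n * (((N / n : ℝ) - ⌊(N / n : ℝ)⌋₊ : ℝ) : ℂ)
        + ∑ m ∈ Icc 1 N, ∑ d ∈ m.divisors, a d := by
    rw [e1, mul_sum, ← sum_add_distrib]
    refine sum_congr rfl fun n _ => ?_
    rw [Nat.floor_div_eq_div]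
    push_cast
    ring
  have e3 : (N : ℝ) * ‖∑ n ∈ Icc 1 N, a n / n‖ ≤ ε / 2 * N := by
    have : (N : ℝ) * ‖∑ n ∈ Icc 1 N, a n / n‖ = ‖(N : ℂ) * ∑ n ∈ Icc 1 N, a n / n‖ := by
      rw [norm_mul, Complex.norm_natCast]
    rw [this, e2]
    refine (norm_add_le _ _).trans ?_
    linarith
  rw [dist_zero_right]
  have : ‖∑ n ∈ Icc 1 N, a n / n‖ ≤ ε / 2 := by
    rw [mul_comm] at e3
    exact le_of_mul_le_mul_right e3 hNpos
  linarith

lemma tendsto_sum_moebius_div :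
    Tendsto (fun N : ℕ => ∑ n ∈ Icc 1 N, (ArithmeticFunction.moebius n : ℂ) / n)
      atTop (nhds 0) := by
  have hχ : ∀ n : ℕ, (1 : DirichletCharacter ℂ 1) n * (ArithmeticFunction.moebius n : ℂ)
      = ArithmeticFunction.moebius n := fun n => by
    rw [MulChar.one_apply (isUnit_of_subsingleton _), one_mul]
  have hm := meanZero_moebius_mul_char (1 : DirichletCharacter ℂ 1)
  have hb := norm_char_mul_moebius_le (1 : DirichletCharacter ℂ 1)
  simp only [hχ] at hm hb
  refine tendsto_sum_div_of_meanZero hb hm fun ε hε => ?_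
  obtain ⟨N₀, h0⟩ := exists_nat_ge (1 / ε)
  refine ⟨max 1 N₀, fun N hN => ?_⟩
  have hN1 : 1 ≤ N := (le_max_left _ _).trans hN
  have hNN : (N₀ : ℝ) ≤ N := by exact_mod_cast (le_max_right _ _).trans hN
  have e : ∑ m ∈ Icc 1 N, ∑ d ∈ m.divisors, (ArithmeticFunction.moebius d : ℂ) = 1 := by
    have h : ∀ m ∈ Icc 1 N, ∑ d ∈ m.divisors, (ArithmeticFunction.moebius d : ℂ)
        = if m = 1 then 1 else 0 := fun m _ => by
      have := congrArg (fun g => g m) ArithmeticFunction.coe_zeta_mul_moebius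
      simp only [ArithmeticFunction.coe_zeta_mul_apply, ArithmeticFunction.one_apply] at this
      exact_mod_cast this
    rw [sum_congr rfl h, sum_ite_eq', if_pos (mem_Icc.2 ⟨le_rfl, hN1⟩)]
  rw [e, norm_one]
  rw [div_le_iff₀ hε] at h0
  nlinarith

/-- The contribution of `hres` vanishes: by duality the divisor sums of `μ(n) hres(p(n))` are the
values of `-hres` at largest prime factors, which average to zero. -/
lemma tendsto_sum_moebiusMinFac_hres_div {k : ℕ} [NeZero k] {a : ZMod k} (ha : IsUnit a) :
    Tendsto (fun N : ℕ => ∑ n ∈ Icc 1 N, moebiusMinFac (hres a) n / n) atTop (nhds 0) := by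
  refine tendsto_sum_div_of_meanZero (norm_moebiusMinFac_le (norm_hres_le a))
    (meanZero_moebiusMinFac (norm_hres_le a)) fun ε hε => ?_
  obtain ⟨N₀, h0⟩ := sum_hres_maxFac ha ε hε
  refine ⟨max 1 N₀, fun N hN => ?_⟩
  have hN1 : 1 ≤ N := (le_max_left _ _).trans hN
  have e : ∑ m ∈ Icc 1 N, ∑ d ∈ m.divisors, moebiusMinFac (hres a) d
      = -∑ m ∈ Icc 2 N, hres a (maxFac m) := by
    rw [← add_sum_Ioc_eq_sum_Icc hN1, Nat.divisors_one, sum_singleton, ← sum_neg_distrib]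
    rw [show moebiusMinFac (hres a) 1 = 0 from if_pos rfl, zero_add]
    refine sum_congr rfl fun m hm => ?_
    exact sum_divisors_moebiusMinFac _ (mem_Ioc.1 hm).1
  rw [e, norm_neg]
  exact h0 N ((le_max_right _ _).trans hN)

/-- Alladi's formula. -/
theorem alladi_formula (k : ℕ) (hk : 1 ≤ k) (ℓ : ℤ) (hlk : Int.gcd ℓ k = 1) :
    Tendsto
      (fun x : ℝ =>
        ∑ n ∈ (Finset.Icc 2 ⌊x⌋₊).filter
            (fun n => (Nat.minFac n : ℤ) ≡ ℓ [ZMOD (k : ℤ)]),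
          (ArithmeticFunction.moebius n : ℝ) / n)
      atTop (nhds (-(1 / (Nat.totient k : ℝ)))) := by
  have : NeZero k := ⟨by omega⟩
  have ha : IsUnit (ℓ : ZMod k) :=
    (ZMod.coe_int_isUnit_iff_isCoprime ℓ k).2 (Int.isCoprime_iff_gcd_eq_one.2 hlk).symm
  have hlim : Tendsto (fun N : ℕ => ∑ n ∈ Icc 1 N, moebiusMinFac (hres (ℓ : ZMod k)) n / n
      + 1 / (k.totient : ℂ) * (∑ n ∈ Icc 1 N, (ArithmeticFunction.moebius n : ℂ) / n - 1))
      atTop (nhds (0 + 1 / (k.totient : ℂ) * (0 - 1))) :=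
    (tendsto_sum_moebiusMinFac_hres_div ha).add
      ((tendsto_sum_moebius_div.sub_const 1).const_mul _)
  have hN : Tendsto (fun N : ℕ => ∑ n ∈ (Icc 2 N).filter
      (fun n => (Nat.minFac n : ℤ) ≡ ℓ [ZMOD (k : ℤ)]), (ArithmeticFunction.moebius n : ℝ) / n)
      atTop (nhds (-(1 / (Nat.totient k : ℝ)))) := by
    have hre := (Complex.continuous_re.tendsto _).comp hlim
    have hval : (0 + 1 / (k.totient : ℂ) * (0 - 1)).re = -(1 / (k.totient : ℝ)) := by
      have : 0 + 1 / (k.totient : ℂ) * (0 - 1) = ((-(1 / (k.totient : ℝ)) : ℝ) : ℂ) := by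
        push_cast; ring
      rw [this, Complex.ofReal_re]
    rw [hval] at hre
    refine hre.congr' ?_
    filter_upwards [eventually_ge_atTop 1] with N hN
    rw [Function.comp_apply, ← Complex.ofReal_re (∑ n ∈ (Icc 2 N).filter _, _)]
    congr 1
    rw [← add_sum_Ioc_eq_sum_Icc hN, ← add_sum_Ioc_eq_sum_Icc hN,
      show moebiusMinFac (hres (ℓ : ZMod k)) 1 = 0 from if_pos rfl,
      ArithmeticFunction.moebius_apply_one, sum_filter]
    push_cast
    rw [zero_div, zero_add, div_one, add_sub_cancel_left, mul_sum, ← sum_add_distrib]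
    refine sum_congr rfl fun n hn => ?_
    have hn1 : n ≠ 1 := by
      have := (mem_Ioc.1 hn).1
      omega
    have hiff : ((n.minFac : ℕ) : ZMod k) = (ℓ : ZMod k) ↔ (n.minFac : ℤ) ≡ ℓ [ZMOD (k : ℤ)] := by
      rw [← ZMod.intCast_eq_intCast_iff, Int.cast_natCast]
    rw [moebiusMinFac, if_neg hn1, hres]
    simp only [hiff]
    split_ifs
    · push_cast; ring
    · push_cast; ring
  exact hN.comp tendsto_nat_floor_atTop
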